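/- Let (G,C) be a strongly connected inhomogeneous Mauldin–Williams graph in ℝ^d satisfying the SOSC such that ∫₀^∞ e^{−s₀(G)t} N_{e^{−t}}(C_i) dt < ∞ for all i ∈ V. If G_M = ℝ, then for every i ∈ V there exists a constant h_i > 0 such that lim_{t→∞} N_{e^{−t}}(K_i^C) / (h_i e^{s₀(G)t}) = 1. -/

import Mathlib

open Set Filter Topology MeasureTheory Metric

noncomputable section

/-- Points of `ℝ^d`. -/
abbrev Pt (d : ℕ) := EuclideanSpace ℝ (Fin d)

/-- The `r`-covering number of `A ⊆ ℝ^d`: the least number of closed balls of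
radius `r` needed to cover `A`. -/
noncomputable def coveringNumber {d : ℕ} (A : Set (Pt d)) (r : ℝ) : ℕ :=
  sInf {k : ℕ | ∃ c : Fin k → Pt d, A ⊆ ⋃ i, Metric.closedBall (c i) r}

/-- A Mauldin–Williams graph in `ℝ^d` over a finite directed multigraph with
vertex type `V` and edge type `E`: each vertex `i` carries a non-empty compact
set `X i` equal to the closure of its interior, and each edge `e` carries a
contractive similarity `S e` of ratio `r e ∈ (0,1)` mapping `X (term e)` into
`X (init e)`. -/
structure MWGraph (d : ℕ) (V E : Type) [Fintype V] [Fintype E] where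
  init : E → V
  term : E → V
  X : V → Set (Pt d)
  S : E → Pt d → Pt d
  r : E → ℝ
  X_nonempty : ∀ i, (X i).Nonempty
  X_compact : ∀ i, IsCompact (X i)
  X_regular : ∀ i, closure (interior (X i)) = X i
  r_pos : ∀ e, 0 < r e
  r_lt_one : ∀ e, r e < 1
  S_maps : ∀ e, Set.MapsTo (S e) (X (term e)) (X (init e))
  S_sim : ∀ e x y, dist (S e x) (S e y) = r e * dist x y

namespace MWGraph

variable {d : ℕ} {V E : Type} [Fintype V] [Fintype E]

variable (G : MWGraph d V E)

/-- `G.IsPathFrom j γ` holds iff the list of edges `γ` is a directed path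
starting at vertex `j`. -/
def IsPathFrom : V → List E → Prop
  | _, [] => True
  | j, e :: es => G.init e = j ∧ IsPathFrom (G.term e) es

/-- Terminal vertex of the path `γ` starting at `j`. -/
def pathTerm : V → List E → V
  | j, [] => j
  | _, e :: es => pathTerm (G.term e) es

/-- `S_γ = S_{e₁} ∘ ⋯ ∘ S_{eₙ}` (with `S_∅ = id`). -/
def pathMap : List E → Pt d → Pt d
  | [] => id
  | e :: es => G.S e ∘ pathMap es

/-- `r_γ = r_{e₁} ⋯ r_{eₙ}` (with `r_∅ = 1`). -/
def pathRatio (γ : List E) : ℝ := (γ.map G.r).prod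

/-- The underlying multigraph is strongly connected: for every ordered pair of
vertices there is a (non-empty) directed path from the first to the second. -/
def StronglyConnected : Prop :=
  ∀ i j : V, ∃ γ : List E, γ ≠ [] ∧ G.IsPathFrom i γ ∧ G.pathTerm i γ = j

/-- `K` is the list of graph-directed self-similar sets of `G`: the unique list
of non-empty compact sets with `K i = ⋃_{e ∈ E_i} S_e (K (term e))`. -/
def IsAttractor (K : V → Set (Pt d)) : Prop :=
  (∀ i, IsCompact (K i)) ∧ (∀ i, (K i).Nonempty) ∧
    ∀ i, K i = ⋃ e ∈ {e : E | G.init e = i}, G.S e '' K (G.term e)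

/-- `C` is an admissible list of condensation sets: compact subsets of the `X i`. -/
def IsCondensation (C : V → Set (Pt d)) : Prop :=
  ∀ i, IsCompact (C i) ∧ C i ⊆ G.X i

/-- `K` is the list of inhomogeneous graph-directed self-similar sets of `(G, C)`:
the unique list of non-empty compact sets with
`K i = ⋃_{e ∈ E_i} S_e (K (term e)) ∪ C i`. -/
def IsInhomAttractor (C : V → Set (Pt d)) (K : V → Set (Pt d)) : Prop :=
  (∀ i, IsCompact (K i)) ∧ (∀ i, (K i).Nonempty) ∧
    ∀ i, K i = (⋃ e ∈ {e : E | G.init e = i}, G.S e '' K (G.term e)) ∪ C i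

/-- `G` satisfies the open set condition with the open sets `U`. -/
def IsOSCWith (U : V → Set (Pt d)) : Prop :=
  (∀ i, (U i).Nonempty) ∧ (∀ i, IsOpen (U i)) ∧ (∀ i, Bornology.IsBounded (U i)) ∧
    (∀ i, U i ⊆ G.X i) ∧
    (∀ i, (⋃ e ∈ {e : E | G.init e = i}, G.S e '' U (G.term e)) ⊆ U i) ∧
    ∀ e e' : E, G.init e = G.init e' → e ≠ e' →
      Disjoint (G.S e '' U (G.term e)) (G.S e' '' U (G.term e'))

/-- The set `{-log r_γ : γ a directed cycle of G}`. -/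
def cycleSet : Set ℝ :=
  {x : ℝ | ∃ (j : V) (γ : List E), γ ≠ [] ∧ G.IsPathFrom j γ ∧ G.pathTerm j γ = j ∧
    x = -Real.log (G.pathRatio γ)}

/-- `G_M`, the smallest closed additive subgroup of `ℝ` containing
`{-log r_γ : γ a directed cycle}`. -/
def GM : Set ℝ := closure ((AddSubgroup.closure (G.cycleSet) : AddSubgroup ℝ) : Set ℝ)

variable [DecidableEq V]

/-- The matrix `A_G^s` with entries `(A_G^s)_{ij} = Σ_{e ∈ E_{ij}} r_e^s`. -/
def Amatrix (s : ℝ) : Matrix V V ℝ :=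
  Matrix.of fun i j => ∑ e : E, if G.init e = i ∧ G.term e = j then G.r e ^ s else 0

end MWGraph

/-- Spectral radius of a real square matrix: the largest modulus of a complex
eigenvalue. -/
noncomputable def matrixSpectralRadius {n : Type} [Fintype n] [DecidableEq n]
    (A : Matrix n n ℝ) : ℝ :=
  sSup {x : ℝ | ∃ μ : ℂ, μ ∈ spectrum ℂ (A.map (fun a : ℝ => (a : ℂ))) ∧ x = ‖μ‖}

/-- `s` is the (unique) exponent `s ≥ 0` with `ρ(A_G^s) = 1`, i.e. `s = s₀(G)`. -/
def IsS0 {d : ℕ} {V E : Type} [Fintype V] [Fintype E] [DecidableEq V]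
    (G : MWGraph d V E) (s : ℝ) : Prop :=
  0 ≤ s ∧ matrixSpectralRadius (G.Amatrix s) = 1

/-!
Multiplying `N_{e^{-t}}(K_i^C)` by `e^{-s₀ t}` and dividing by the Perron-Frobenius eigenvector of
the irreducible matrix `A_G^{s₀}` turns the subadditivity of covering numbers into a system of
renewal inequalities with integrable errors, whose weights satisfy Kirchhoff's law. The flux of such
a system increases at most by the integral of the errors, hence it converges. If the system is close
to its upper limit `M` at some late time, so it is at all earlier times which differ from it by the
length of a walk, and as `G_M = ℝ` these fill whole windows up to a small error; the flux then takes
values close to the largest possible one, and since its limit is this value, each component has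
limit `M`. The limit is positive since the packing numbers within the disjoint open sets `S_e(U)`
are superadditive, which bounds the covering numbers below by a multiple of `e^{s₀ t}`.
-/

open scoped NNReal ENNReal

section CoveringNumber

variable {X Y ι : Type*} [PseudoEMetricSpace X] [PseudoEMetricSpace Y] {ε : ℝ≥0}

lemma exists_isCover_encard_eq_externalCoveringNumber (ε : ℝ≥0) (A : Set X) :
    ∃ N, IsCover ε A N ∧ N.encard = externalCoveringNumber ε A := by
  have : Nonempty {N : Set X // IsCover ε A N} := ⟨⟨A, .refl ε A⟩⟩
  obtain ⟨N, hN⟩ := ciInf_mem fun N : {N : Set X // IsCover ε A N} => N.1.encard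
  exact ⟨N, N.2, hN.trans (iInf_subtype (f := fun N : {N // IsCover ε A N} => N.1.encard))⟩

lemma externalCoveringNumber_union_le (ε : ℝ≥0) (A B : Set X) :
    externalCoveringNumber ε (A ∪ B) ≤
      externalCoveringNumber ε A + externalCoveringNumber ε B := by
  obtain ⟨M, hM, hMA⟩ := exists_isCover_encard_eq_externalCoveringNumber ε A
  obtain ⟨N, hN, hNB⟩ := exists_isCover_encard_eq_externalCoveringNumber ε B
  rw [← hMA, ← hNB]
  have hMN : IsCover ε (A ∪ B) (M ∪ N) := by
    rintro x (hx | hx)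
    · exact hM.mono subset_union_left hx
    · exact hN.mono subset_union_right hx
  exact hMN.externalCoveringNumber_le_encard.trans (encard_union_le M N)

lemma externalCoveringNumber_biUnion_le (ε : ℝ≥0) (s : Finset ι) (A : ι → Set X) :
    externalCoveringNumber ε (⋃ i ∈ s, A i) ≤ ∑ i ∈ s, externalCoveringNumber ε (A i) := by
  classical
  induction s using Finset.induction_on with
  | empty => simp
  | insert i s hi ih =>
    rw [Finset.set_biUnion_insert, Finset.sum_insert hi]
    exact (externalCoveringNumber_union_le ε _ _).trans (by gcongr)

lemma externalCoveringNumber_image_le {f : X → Y} {k : ℝ≥0} (hf : LipschitzWith k f)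
    (ε : ℝ≥0) (A : Set X) :
    externalCoveringNumber (k * ε) (f '' A) ≤ externalCoveringNumber ε A := by
  obtain ⟨N, hN, hNA⟩ := exists_isCover_encard_eq_externalCoveringNumber ε A
  rw [← hNA]
  exact (hN.image_lipschitz hf).externalCoveringNumber_le_encard.trans (encard_image_le f N)

lemma externalCoveringNumber_ne_top_of_isCompact {A : Set X} (hA : IsCompact A) (hε : ε ≠ 0) :
    externalCoveringNumber ε A ≠ ⊤ := by
  obtain ⟨N, -, hN, hNA⟩ := exists_finite_isCover_of_isCompact hε hA
  exact (hNA.externalCoveringNumber_le_encard.trans_lt hN.encard_lt_top).ne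

variable {d : ℕ} {A : Set (Pt d)} {r : ℝ}

lemma coe_coveringNumber (hA : IsCompact A) (hr : 0 < r) :
    (coveringNumber A r : ℕ∞) = externalCoveringNumber r.toNNReal A := by
  have isCover_range_iff (k : ℕ) (c : Fin k → Pt d) :
      A ⊆ ⋃ i, closedBall (c i) r ↔ IsCover r.toNNReal A (range c) := by
    rw [isCover_iff_subset_iUnion_closedBall, Real.coe_toNNReal r hr.le, biUnion_range]
  obtain ⟨N, hN, hNA⟩ := exists_isCover_encard_eq_externalCoveringNumber r.toNNReal A
  have hN_finite : N.Finite := by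
    rw [← encard_ne_top_iff, hNA]
    exact externalCoveringNumber_ne_top_of_isCompact hA (Real.toNNReal_pos.2 hr).ne'
  have hN_mem : N.ncard ∈ {k : ℕ | ∃ c : Fin k → Pt d, A ⊆ ⋃ i, closedBall (c i) r} := by
    have := hN_finite.to_subtype
    let c := Finite.equivFinOfCardEq (Nat.card_coe_set_eq N)
    refine ⟨Subtype.val ∘ c.symm, (isCover_range_iff _ _).2 ?_⟩
    rwa [EquivLike.range_comp, Subtype.range_coe]
  apply le_antisymm
  · rw [← hNA, ← hN_finite.cast_ncard_eq]
    exact_mod_cast Nat.sInf_le hN_mem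
  · obtain ⟨c, hc⟩ := Nat.sInf_mem ⟨_, hN_mem⟩
    refine ((isCover_range_iff _ c).1 hc).externalCoveringNumber_le_encard.trans ?_
    rw [← image_univ]
    exact (encard_image_le c univ).trans (by simp [_root_.coveringNumber])

lemma coveringNumber_anti (hA : IsCompact A) {r' : ℝ} (hr : 0 < r) (hr' : r ≤ r') :
    coveringNumber A r' ≤ coveringNumber A r := by
  have := externalCoveringNumber_anti (A := A) (Real.toNNReal_mono hr')
  rw [← coe_coveringNumber hA hr, ← coe_coveringNumber hA (hr.trans_le hr')] at this
  exact_mod_cast this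

end CoveringNumber

section InnerPackingNumber

variable {X ι : Type*}

lemma packingNumber_mono_set [PseudoEMetricSpace X] {ε : ℝ≥0} {A B : Set X} (hAB : A ⊆ B) :
    packingNumber ε A ≤ packingNumber ε B :=
  iSup_le fun _ => iSup₂_le fun hC hε => hε.encard_le_packingNumber (hC.trans hAB)

lemma packingNumber_add_le_packingNumber_union [PseudoEMetricSpace X] {ε : ℝ≥0} {A B : Set X}
    (hAB : ∀ x ∈ A, ∀ y ∈ B, ε < edist x y) :
    packingNumber ε A + packingNumber ε B ≤ packingNumber ε (A ∪ B) := by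
  by_cases hA : packingNumber ε A = ⊤
  · simpa [hA] using packingNumber_mono_set (ε := ε) (A.subset_union_left (t := B))
  by_cases hB : packingNumber ε B = ⊤
  · simpa [hB] using packingNumber_mono_set (ε := ε) (A.subset_union_right (t := B))
  obtain ⟨M, hMA, -, hM, hM_card⟩ := exists_set_encard_eq_packingNumber hA
  obtain ⟨N, hNB, -, hN, hN_card⟩ := exists_set_encard_eq_packingNumber hB
  have hMN : Disjoint M N := disjoint_left.2 fun x hxM hxN => by
    simpa using hAB x (hMA hxM) x (hNB hxN)
  have : Std.Symm fun x y : X => ε < edist x y := ⟨fun x y h => by rwa [edist_comm]⟩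
  have hMN_sep : IsSeparated ε (M ∪ N) :=
    pairwise_union_of_symm.2
      ⟨hM, hN, fun x hx y hy _ => hAB x (hMA hx) y (hNB hy)⟩
  rw [← hM_card, ← hN_card, ← encard_union_eq hMN]
  exact hMN_sep.encard_le_packingNumber (union_subset_union hMA hNB)

lemma sum_packingNumber_le_packingNumber_biUnion [PseudoEMetricSpace X] {ε : ℝ≥0} (s : Finset ι)
    {A : ι → Set X}
    (hA : ∀ i ∈ s, ∀ j ∈ s, i ≠ j → ∀ x ∈ A i, ∀ y ∈ A j, ε < edist x y) :
    ∑ i ∈ s, packingNumber ε (A i) ≤ packingNumber ε (⋃ i ∈ s, A i) := by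
  classical
  induction s using Finset.induction_on with
  | empty => simp
  | insert i s hi ih =>
    have hAi : ∀ x ∈ A i, ∀ y ∈ ⋃ j ∈ s, A j, ε < edist x y := by
      intro x hx y hy
      obtain ⟨j, hj, hyj⟩ := mem_iUnion₂.1 hy
      exact hA i (s.mem_insert_self i) j (Finset.mem_insert_of_mem hj)
        (fun hij => hi (hij ▸ hj)) x hx y hyj
    rw [Finset.set_biUnion_insert, Finset.sum_insert hi]
    refine le_trans ?_ (packingNumber_add_le_packingNumber_union hAi)
    gcongr
    exact ih fun j hj k hk =>
      hA j (Finset.mem_insert_of_mem hj) k (Finset.mem_insert_of_mem hk)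

variable [PseudoMetricSpace X]

/-- The largest cardinality of an `ε`-separated set of points of `A` whose closed `ε`-balls are
contained in `U`. -/
def innerPackingNumber (ε : ℝ≥0) (A U : Set X) : ℕ∞ :=
  packingNumber ε (A ∩ {x | closedBall x ε ⊆ U})

lemma innerPackingNumber_le_packingNumber (ε : ℝ≥0) (A U : Set X) :
    innerPackingNumber ε A U ≤ packingNumber ε A :=
  packingNumber_mono_set inter_subset_left

lemma innerPackingNumber_mono {ε : ℝ≥0} {A A' U U' : Set X} (hA : A ⊆ A') (hU : U ⊆ U') :
    innerPackingNumber ε A U ≤ innerPackingNumber ε A' U' :=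
  packingNumber_mono_set (inter_subset_inter hA fun _ hx => hx.trans hU)

lemma eventually_innerPackingNumber_pos {A U : Set X} (hU : IsOpen U) (hAU : (U ∩ A).Nonempty) :
    ∀ᶠ ε in 𝓝 (0 : ℝ≥0), 0 < innerPackingNumber ε A U := by
  obtain ⟨x, hxU, hxA⟩ := hAU
  have hball : ∀ᶠ δ in 𝓝 (0 : ℝ), closedBall x δ ⊆ U :=
    eventually_closedBall_subset (hU.mem_nhds hxU)
  filter_upwards [NNReal.tendsto_coe.2 tendsto_id |>.eventually hball] with ε hε
  exact packingNumber_pos_iff.2 ⟨x, hxA, hε⟩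

lemma sum_innerPackingNumber_le_of_pairwiseDisjoint {ε : ℝ≥0} (s : Finset ι) {A U : ι → Set X}
    (hU : (s : Set ι).PairwiseDisjoint U) :
    ∑ i ∈ s, innerPackingNumber ε (A i) (U i) ≤
      innerPackingNumber ε (⋃ i ∈ s, A i) (⋃ i ∈ s, U i) := by
  refine (sum_packingNumber_le_packingNumber_biUnion s ?_).trans (packingNumber_mono_set ?_)
  · rintro i hi j hj hij x ⟨-, hx⟩ y ⟨-, hy⟩
    have hyU : y ∈ U j := hy (mem_closedBall_self ε.2)
    have hyx : y ∉ closedBall x ε := fun h => (hU hi hj hij).le_bot ⟨hx h, hyU⟩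
    rwa [mem_closedBall, not_le, dist_comm, dist_nndist, NNReal.coe_lt_coe, ← ENNReal.coe_lt_coe,
      ← edist_nndist] at hyx
  · exact iUnion₂_subset fun i hi => inter_subset_inter (subset_biUnion_of_mem (u := A) hi)
      fun x hx => hx.trans (subset_biUnion_of_mem (u := U) hi)

lemma innerPackingNumber_le_image {X Y : Type*} [MetricSpace X] [MetricSpace Y] {f : X → Y}
    {k : ℝ≥0} (hk : 0 < k) (hf : ∀ x y, dist (f x) (f y) = k * dist x y)
    (hf_surj : Function.Surjective f) (ε : ℝ≥0) (A U : Set X) :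
    innerPackingNumber ε A U ≤ innerPackingNumber (k * ε) (f '' A) (f '' U) := by
  have hf_anti : AntilipschitzWith k⁻¹ f := AntilipschitzWith.of_le_mul_dist fun x y => by
    rw [hf, NNReal.coe_inv, inv_mul_cancel_left₀ (by positivity)]
  refine iSup_le fun C => iSup₂_le fun hC hC_sep => ?_
  have hfC_sep : IsSeparated (k * ε : ℝ≥0) (f '' C) := by
    simpa [div_inv_eq_mul, mul_comm] using hC_sep.image_antilipschitz hf_anti (inv_pos.2 hk)
  rw [← hf_anti.injective.encard_image C]
  refine hfC_sep.encard_le_packingNumber (image_subset_iff.2 fun x hx => ?_)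
  refine ⟨mem_image_of_mem f (hC hx).1, fun y hy => ?_⟩
  obtain ⟨z, rfl⟩ := hf_surj y
  rw [mem_closedBall, hf, NNReal.coe_mul] at hy
  exact mem_image_of_mem f ((hC hx).2 (le_of_mul_le_mul_left hy (by positivity)))

end InnerPackingNumber

lemma surjective_of_dist_eq_mul {W : Type*} [NormedAddCommGroup W] [NormedSpace ℝ W]
    [StrictConvexSpace ℝ W] [FiniteDimensional ℝ W] {f : W → W} {r : ℝ} (hr : 0 < r)
    (hf : ∀ x y, dist (f x) (f y) = r * dist x y) : Function.Surjective f := by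
  have hiso : Isometry fun x => r⁻¹ • f x := Isometry.of_dist_eq fun x y => by
    rw [dist_smul₀, hf, norm_inv, Real.norm_of_nonneg hr.le, inv_mul_cancel_left₀ hr.ne']
  have hsurj : Function.Surjective hiso.affineIsometryOfStrictConvexSpace := by
    rw [← AffineIsometry.coe_toAffineMap, ← AffineMap.linear_surjective_iff]
    exact LinearMap.surjective_of_injective
      hiso.affineIsometryOfStrictConvexSpace.linearIsometry.injective
  intro y
  obtain ⟨x, hx⟩ := hsurj (r⁻¹ • y)
  exact ⟨x, smul_right_injective _ (inv_ne_zero hr.ne') hx⟩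

section PerronFrobenius

open scoped Matrix

attribute [local instance] Matrix.linftyOpNormedRing Matrix.linftyOpNormedAlgebra

variable {n : Type} [Fintype n] {A : Matrix n n ℝ}

lemma mulVec_mono (hA : ∀ i j, 0 ≤ A i j) {x y : n → ℝ} (hxy : x ≤ y) : A *ᵥ x ≤ A *ᵥ y :=
  fun i => Finset.sum_le_sum fun j _ => mul_le_mul_of_nonneg_left (hxy j) (hA i j)

lemma mulVec_pos {B : Matrix n n ℝ} (hB : ∀ i j, 0 < B i j) {z : n → ℝ} (hz : 0 < z) (i : n) :
    0 < (B *ᵥ z) i := by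
  obtain ⟨hz_nonneg, j, hj⟩ := Pi.lt_def.1 hz
  exact Finset.sum_pos' (fun k _ => mul_nonneg (hB i k).le (hz_nonneg k))
    ⟨j, Finset.mem_univ j, mul_pos (hB i j) hj⟩

lemma exists_commute_pos (hA : A.IsIrreducible) :
    ∃ B : Matrix n n ℝ, Commute A B ∧ ∀ i j, 0 < B i j := by
  classical
  choose k _ hk using (Matrix.isIrreducible_iff_exists_pow_pos hA.nonneg).1 hA
  refine ⟨∑ p : n × n, A ^ k p.1 p.2,
    Commute.sum_right _ _ _ fun p _ => Commute.self_pow A _, fun i j => ?_⟩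
  rw [Matrix.sum_apply]
  exact Finset.sum_pos' (fun p _ => Matrix.pow_apply_nonneg hA.nonneg _ i j)
    ⟨(i, j), Finset.mem_univ _, hk i j⟩

variable [DecidableEq n]

lemma finite_norm_spectrum (A : Matrix n n ℝ) :
    {x : ℝ | ∃ μ : ℂ, μ ∈ spectrum ℂ (A.map Complex.ofReal) ∧ x = ‖μ‖}.Finite :=
  ((Matrix.finite_spectrum (A.map Complex.ofReal)).image norm).subset
    fun _ ⟨μ, hμ, hx⟩ => ⟨μ, hμ, hx.symm⟩

lemma exists_mem_spectrum_norm_eq_matrixSpectralRadius [Nonempty n] (A : Matrix n n ℝ) :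
    ∃ μ ∈ spectrum ℂ (A.map Complex.ofReal), ‖μ‖ = matrixSpectralRadius A := by
  obtain ⟨ν, hν⟩ :=
    spectrum.nonempty_of_isAlgClosed_of_finiteDimensional ℂ (A.map Complex.ofReal)
  have hne : {x : ℝ | ∃ μ : ℂ, μ ∈ spectrum ℂ (A.map Complex.ofReal) ∧ x = ‖μ‖}.Nonempty :=
    ⟨‖ν‖, ν, hν, rfl⟩
  obtain ⟨μ, hμ, hμA⟩ := hne.csSup_mem (finite_norm_spectrum A)
  exact ⟨μ, hμ, hμA.symm⟩

lemma spectralRadius_map_ofReal_le (A : Matrix n n ℝ) :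
    spectralRadius ℂ (A.map Complex.ofReal) ≤ ENNReal.ofReal (matrixSpectralRadius A) := by
  refine iSup₂_le fun μ hμ => ?_
  rw [← enorm_eq_nnnorm, ← ofReal_norm]
  exact ENNReal.ofReal_le_ofReal (le_csSup (finite_norm_spectrum A).bddAbove ⟨μ, hμ, rfl⟩)

lemma matrixSpectralRadius_transpose (A : Matrix n n ℝ) :
    matrixSpectralRadius Aᵀ = matrixSpectralRadius A := by
  have hspec : spectrum ℂ (Aᵀ.map (fun a : ℝ => (a : ℂ))) =
      spectrum ℂ (A.map (fun a : ℝ => (a : ℂ))) := by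
    ext μ
    rw [spectrum.mem_iff, spectrum.mem_iff, ← Matrix.isUnit_transpose, Matrix.transpose_sub,
      Matrix.transpose_map, Matrix.algebraMap_eq_diagonal, Matrix.diagonal_transpose,
      Matrix.transpose_transpose]
  simp only [matrixSpectralRadius, hspec]

lemma pow_smul_le_pow_mulVec (hA : ∀ i j, 0 ≤ A i j) {y : n → ℝ} {a : ℝ} (ha : 0 ≤ a)
    (h : a • y ≤ A *ᵥ y) (k : ℕ) : a ^ k • y ≤ A ^ k *ᵥ y := by
  induction k with
  | zero => simp
  | succ k ih =>
    calc a ^ (k + 1) • y = a ^ k • a • y := by rw [pow_succ, mul_smul]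
      _ ≤ a ^ k • A *ᵥ y := by gcongr
      _ = A *ᵥ (a ^ k • y) := (Matrix.mulVec_smul _ _ _).symm
      _ ≤ A *ᵥ (A ^ k *ᵥ y) := mulVec_mono hA ih
      _ = A ^ (k + 1) *ᵥ y := by rw [Matrix.mulVec_mulVec, pow_succ']

lemma pow_le_norm_pow (hA : ∀ i j, 0 ≤ A i j) {y : n → ℝ} (hy : 0 < y) {a : ℝ} (ha : 0 ≤ a)
    (h : a • y ≤ A *ᵥ y) (k : ℕ) : a ^ k ≤ ‖A ^ k‖ := by
  have hmono {x z : n → ℝ} (hx : 0 ≤ x) (hxz : x ≤ z) : ‖x‖ ≤ ‖z‖ :=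
    (pi_norm_le_iff_of_nonneg (norm_nonneg z)).2 fun i =>
      (Real.norm_of_nonneg (hx i)).trans_le
        ((hxz i).trans ((Real.le_norm_self _).trans (norm_le_pi_norm z i)))
  have hnorm : a ^ k * ‖y‖ ≤ ‖A ^ k‖ * ‖y‖ := by
    rw [← Real.norm_of_nonneg (pow_nonneg ha k), ← norm_smul]
    exact (hmono (smul_nonneg (pow_nonneg ha k) hy.le)
      (pow_smul_le_pow_mulVec hA ha h k)).trans (Matrix.linfty_opNorm_mulVec _ _)
  exact le_of_mul_le_mul_right hnorm (norm_pos_iff.2 hy.ne')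

lemma le_matrixSpectralRadius_of_smul_le_mulVec (hA : ∀ i j, 0 ≤ A i j) {y : n → ℝ}
    (hy : 0 < y) {a : ℝ} (ha : 0 ≤ a) (h : a • y ≤ A *ᵥ y) : a ≤ matrixSpectralRadius A := by
  have : Nonempty n := (Pi.lt_def.1 hy).2.nonempty
  obtain ⟨μ, -, hμ⟩ := exists_mem_spectrum_norm_eq_matrixSpectralRadius A
  rw [← ENNReal.ofReal_le_ofReal_iff (hμ ▸ norm_nonneg μ)]
  refine (ge_of_tendsto (spectrum.pow_norm_pow_one_div_tendsto_nhds_spectralRadius _) ?_).trans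
    (spectralRadius_map_ofReal_le A)
  filter_upwards [eventually_ne_atTop 0] with k hk
  have hk_norm : ‖A.map Complex.ofReal ^ k‖ = ‖A ^ k‖ := by
    have : (A ^ k).map Complex.ofReal = A.map Complex.ofReal ^ k :=
      Matrix.map_pow A Complex.ofRealHom k
    rw [← this]
    simp [Matrix.linfty_opNorm_def]
  rw [hk_norm, one_div]
  refine ENNReal.ofReal_le_ofReal
    ((Real.le_rpow_inv_iff_of_pos ha (norm_nonneg _) (by positivity)).2 ?_)
  simpa using pow_le_norm_pow hA hy ha h k

lemma exists_pos_smul_le_mulVec [Nonempty n] (hA : ∀ i j, 0 ≤ A i j) :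
    ∃ x : n → ℝ, 0 < x ∧ matrixSpectralRadius A • x ≤ A *ᵥ x := by
  obtain ⟨μ, hμ, hμA⟩ := exists_mem_spectrum_norm_eq_matrixSpectralRadius A
  rw [← Matrix.spectrum_toLin', ← Module.End.hasEigenvalue_iff_mem_spectrum] at hμ
  obtain ⟨v, hv⟩ := hμ.exists_hasEigenvector
  have hv_eq : A.map Complex.ofReal *ᵥ v = μ • v := by simpa using hv.apply_eq_smul
  have hv_norm : (0 : n → ℝ) < fun i => ‖v i‖ := by
    obtain ⟨i, hi⟩ := Function.ne_iff.1 hv.2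
    exact Pi.lt_def.2 ⟨fun j => norm_nonneg (v j), i, norm_pos_iff.2 hi⟩
  refine ⟨fun i => ‖v i‖, hv_norm, fun i => ?_⟩
  calc matrixSpectralRadius A * ‖v i‖ = ‖(A.map Complex.ofReal *ᵥ v) i‖ := by
        rw [hv_eq, Pi.smul_apply, norm_smul, hμA]
    _ ≤ ∑ j, ‖(A i j : ℂ) * v j‖ := norm_sum_le _ _
    _ = (A *ᵥ fun i => ‖v i‖) i := by
        simp [Matrix.mulVec, dotProduct, abs_of_nonneg (hA i _)]

lemma exists_mulVec_le_matrixSpectralRadius_mul [Nonempty n] (hA : ∀ i j, 0 ≤ A i j) {y : n → ℝ}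
    (hy : ∀ i, 0 < y i) : ∃ i, (A *ᵥ y) i ≤ matrixSpectralRadius A * y i := by
  obtain ⟨m, hm⟩ := Finite.exists_min fun i => (A *ᵥ y) i / y i
  refine ⟨m, (div_le_iff₀ (hy m)).1 ?_⟩
  refine le_matrixSpectralRadius_of_smul_le_mulVec hA (Pi.lt_def.2 ⟨fun i => (hy i).le, m, hy m⟩)
    (div_nonneg (Finset.sum_nonneg fun j _ => mul_nonneg (hA m j) (hy j).le) (hy m).le) ?_
  exact fun i => (le_div_iff₀ (hy i)).1 (hm i)

-- If the excess `A x - ρ x` of a dominating vector `x` were non-zero, the positive matrix `B` would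
-- turn it into a strict excess in every coordinate, contradicting the maximality of `ρ`.
theorem exists_pos_mulVec_eq_smul [Nonempty n] (hA : A.IsIrreducible) :
    ∃ u : n → ℝ, (∀ i, 0 < u i) ∧ A *ᵥ u = matrixSpectralRadius A • u := by
  obtain ⟨x, hx, hxA⟩ := exists_pos_smul_le_mulVec hA.nonneg
  obtain ⟨B, hAB, hB⟩ := exists_commute_pos hA
  have hu : ∀ i, 0 < (B *ᵥ x) i := mulVec_pos hB hx
  have hexcess : A *ᵥ (B *ᵥ x) - matrixSpectralRadius A • (B *ᵥ x) =
      B *ᵥ (A *ᵥ x - matrixSpectralRadius A • x) := by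
    rw [Matrix.mulVec_sub, Matrix.mulVec_smul, Matrix.mulVec_mulVec, Matrix.mulVec_mulVec, hAB.eq]
  rcases hxA.eq_or_lt with hx_eq | hx_lt
  · refine ⟨B *ᵥ x, hu, sub_eq_zero.1 ?_⟩
    rw [hexcess, hx_eq, sub_self, Matrix.mulVec_zero]
  · obtain ⟨i, hi⟩ := exists_mulVec_le_matrixSpectralRadius_mul hA.nonneg hu
    have hi_pos := mulVec_pos hB (sub_pos.2 hx_lt) i
    rw [← hexcess] at hi_pos
    exact absurd hi (sub_pos.1 hi_pos).not_ge

theorem exists_pos_vecMul_eq_smul [Nonempty n] (hA : A.IsIrreducible) :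
    ∃ v : n → ℝ, (∀ i, 0 < v i) ∧ v ᵥ* A = matrixSpectralRadius A • v := by
  obtain ⟨v, hv, hvA⟩ := exists_pos_mulVec_eq_smul hA.transpose
  exact ⟨v, hv, by rw [← Matrix.mulVec_transpose, hvA, matrixSpectralRadius_transpose]⟩

end PerronFrobenius

section DenseSubmonoid

variable {S : AddSubmonoid ℝ}

lemma exists_sub_eq_of_mem_closure {x : ℝ} (hx : x ∈ AddSubgroup.closure (S : Set ℝ)) :
    ∃ a ∈ S, ∃ b ∈ S, a - b = x := by
  induction hx using AddSubgroup.closure_induction with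
  | mem x hx => exact ⟨x, hx, 0, S.zero_mem, sub_zero x⟩
  | zero => exact ⟨0, S.zero_mem, 0, S.zero_mem, sub_zero 0⟩
  | add x y _ _ hx hy =>
    obtain ⟨a, ha, b, hb, rfl⟩ := hx
    obtain ⟨a', ha', b', hb', rfl⟩ := hy
    exact ⟨a + a', S.add_mem ha ha', b + b', S.add_mem hb hb', add_sub_add_comm a a' b b'⟩
  | neg x _ hx =>
    obtain ⟨a, ha, b, hb, rfl⟩ := hx
    exact ⟨b, hb, a, ha, (neg_sub a b).symm⟩

lemma exists_pos_add_mem_of_dense (hS : ∀ x ∈ S, 0 ≤ x)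
    (hS_dense : Dense (AddSubgroup.closure (S : Set ℝ) : Set ℝ)) {ε : ℝ} (hε : 0 < ε) :
    ∃ b > 0, ∃ g ∈ Ioo 0 ε, b ∈ S ∧ b + g ∈ S := by
  obtain ⟨_, hx, hx_pos, hx_lt⟩ := hS_dense.exists_between hε
  obtain ⟨a, ha, b, hb, rfl⟩ := exists_sub_eq_of_mem_closure hx
  refine ⟨b + a, by linarith [hS b hb], a - b, ⟨hx_pos, hx_lt⟩, S.add_mem hb ha, ?_⟩
  rw [show b + a + (a - b) = a + a by ring]
  exact S.add_mem ha ha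

-- With `b, b + g ∈ S` for a tiny `g > 0`, the elements `n b + k g`, `k ≤ n`, of `S` form
-- progressions of step `g` which overlap as soon as `n g ≥ b`.
lemma eventually_exists_mem_Ioo_of_dense (hS : ∀ x ∈ S, 0 ≤ x)
    (hS_dense : Dense (AddSubgroup.closure (S : Set ℝ) : Set ℝ)) {ε : ℝ} (hε : 0 < ε) :
    ∀ᶠ x in atTop, ∃ y ∈ S, y ∈ Ioo x (x + ε) := by
  obtain ⟨b, hb, g, ⟨hg, hgε⟩, hbS, hbgS⟩ := exists_pos_add_mem_of_dense hS hS_dense hε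
  filter_upwards [eventually_ge_atTop 0, eventually_ge_atTop ((b / g + 2) * b)] with x hx hx'
  set n := ⌊x / b⌋₊
  have hn_le : n * b ≤ x := (le_div_iff₀ hb).1 (Nat.floor_le (by positivity))
  have hn_gt : x < (n + 1) * b := (div_lt_iff₀ hb).1 (Nat.lt_floor_add_one _)
  set k := ⌊(x - n * b) / g⌋₊ + 1 with hk
  have hk_gt : x - n * b < k * g := (div_lt_iff₀ hg).1 (by exact_mod_cast Nat.lt_floor_add_one _)
  have hk_le : k * g ≤ x - n * b + g := by
    have := (le_div_iff₀ hg).1 (Nat.floor_le (div_nonneg (sub_nonneg.2 hn_le) hg.le))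
    rw [hk]
    push_cast
    linarith
  have hkn : k ≤ n := by
    have hk_le' : (k : ℝ) ≤ b / g + 1 := by
      rw [← mul_le_mul_iff_left₀ hg, add_mul, div_mul_cancel₀ _ hg.ne']
      linarith
    have hn_ge : b / g + 1 ≤ n := by
      have := lt_of_mul_lt_mul_right (hx'.trans_lt hn_gt) hb.le
      linarith
    exact_mod_cast hk_le'.trans hn_ge
  obtain ⟨m, hm⟩ := Nat.exists_eq_add_of_le hkn
  have hy : k • (b + g) + m • b = n * b + k * g := by
    rw [hm]
    simp only [nsmul_eq_mul]
    push_cast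
    ring
  refine ⟨k • (b + g) + m • b, S.add_mem (S.nsmul_mem hbgS k) (S.nsmul_mem hbS m), ?_⟩
  rw [hy]
  constructor <;> linarith

end DenseSubmonoid

/-- A directed multigraph with vertices `V` and edges `E` whose edges carry positive lengths,
thought of as time delays: the combinatorial datum of a system of renewal inequalities
`Z i t ≤ ∑ Z (term e) (t - delay e) + g i t`. -/
structure DelayGraph (V E : Type*) where
  init : E → V
  term : E → V
  delay : E → ℝ
  delay_pos : ∀ e, 0 < delay e

namespace DelayGraph

variable {V E : Type*}

/-- `D.HasWalk i j ℓ` says that some directed walk from `i` to `j` has total length `ℓ`; the empty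
walk is allowed. -/
inductive HasWalk (D : DelayGraph V E) : V → V → ℝ → Prop
  | nil (i : V) : D.HasWalk i i 0
  | cons (e : E) {j : V} {ℓ : ℝ} : D.HasWalk (D.term e) j ℓ →
      D.HasWalk (D.init e) j (D.delay e + ℓ)

/-- Any two vertices are joined by a walk, which is moreover non-empty, i.e. of positive length. -/
def StronglyConnected (D : DelayGraph V E) : Prop :=
  ∀ i j, ∃ ℓ > 0, D.HasWalk i j ℓ

/-- The lengths of closed walks generate a dense subgroup of `ℝ`. -/
def Nonlattice (D : DelayGraph V E) : Prop :=
  Dense (AddSubgroup.closure {ℓ | ∃ i, D.HasWalk i i ℓ} : Set ℝ)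

variable {D : DelayGraph V E}

lemma HasWalk.trans {i j k : V} {ℓ ℓ' : ℝ} (h : D.HasWalk i j ℓ) (h' : D.HasWalk j k ℓ') :
    D.HasWalk i k (ℓ + ℓ') := by
  induction h with
  | nil => rwa [zero_add]
  | cons e _ ih => rw [add_assoc]; exact .cons e (ih h')

lemma HasWalk.nonneg {i j : V} {ℓ : ℝ} (h : D.HasWalk i j ℓ) : 0 ≤ ℓ := by
  induction h with
  | nil => exact le_rfl
  | cons e _ ih => exact add_nonneg (D.delay_pos e).le ih

lemma HasWalk.eq_zero_or_exists_term_eq {i j : V} {ℓ : ℝ} (h : D.HasWalk i j ℓ) :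
    (i = j ∧ ℓ = 0) ∨ ∃ e, D.term e = j := by
  induction h with
  | nil => exact .inl ⟨rfl, rfl⟩
  | cons e _ ih => exact .inr (ih.elim (fun h => ⟨e, h.1⟩) id)

lemma StronglyConnected.exists_term_eq (hD : D.StronglyConnected) (j : V) :
    ∃ e, D.term e = j := by
  obtain ⟨ℓ, hℓ, hw⟩ := hD j j
  exact hw.eq_zero_or_exists_term_eq.resolve_left fun h => hℓ.ne' h.2

variable (D) in
/-- The submonoid of `ℝ` formed by the lengths of the closed walks at the vertex `i`. -/
def closedWalkLengths (i : V) : AddSubmonoid ℝ where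
  carrier := {ℓ | D.HasWalk i i ℓ}
  zero_mem' := .nil i
  add_mem' := .trans

lemma Nonlattice.dense_closure_closedWalkLengths (hD : D.Nonlattice) (hSC : D.StronglyConnected)
    (i : V) : Dense (AddSubgroup.closure (D.closedWalkLengths i : Set ℝ) : Set ℝ) := by
  refine hD.mono ((AddSubgroup.closure_le _).2 ?_)
  rintro ℓ ⟨j, hℓ⟩
  obtain ⟨a, -, ha⟩ := hSC i j
  obtain ⟨b, -, hb⟩ := hSC j i
  rw [show ℓ = a + ℓ + b - (a + b) by ring]
  exact sub_mem (AddSubgroup.subset_closure ((ha.trans hℓ).trans hb))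
    (AddSubgroup.subset_closure (ha.trans hb))

lemma Nonlattice.eventually_exists_hasWalk (hD : D.Nonlattice) (hSC : D.StronglyConnected)
    (i j : V) {ε : ℝ} (hε : 0 < ε) : ∀ᶠ x in atTop, ∃ ℓ ∈ Ioo x (x + ε), D.HasWalk i j ℓ := by
  obtain ⟨a, -, ha⟩ := hSC i j
  have hloop := eventually_exists_mem_Ioo_of_dense (fun _ hℓ => HasWalk.nonneg hℓ)
    (hD.dense_closure_closedWalkLengths hSC j) hε
  filter_upwards [(tendsto_atTop_add_const_right atTop (-a) tendsto_id).eventually hloop]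
    with x ⟨ℓ, hℓ, hx, hx'⟩
  rw [id] at hx hx'
  exact ⟨a + ℓ, ⟨by linarith, by linarith⟩, ha.trans hℓ⟩

end DelayGraph

/-- `exp (s t) f t` is non-decreasing, so that `f` decreases at most at the exponential rate `s`.
This Tauberian regularity makes averages of `f` control its pointwise values. -/
def ExpMonotone (s : ℝ) (f : ℝ → ℝ) : Prop :=
  Monotone fun t => Real.exp (s * t) * f t

namespace ExpMonotone

variable {s t t' b : ℝ} {f : ℝ → ℝ}

lemma exp_mul_le (hf : ExpMonotone s f) (htt' : t ≤ t') :
    Real.exp (-(s * (t' - t))) * f t ≤ f t' := by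
  have h := mul_le_mul_of_nonneg_left (hf htt') (Real.exp_nonneg (-(s * t')))
  simp only [← mul_assoc, ← Real.exp_add] at h
  simpa [show -(s * t') + s * t = -(s * (t' - t)) by ring] using h

lemma exp_mul_le_of_le_add (hf : ExpMonotone s f) (hs : 0 ≤ s) (hf_nonneg : 0 ≤ f t)
    (htt' : t ≤ t') (ht'b : t' ≤ t + b) : Real.exp (-(s * b)) * f t ≤ f t' := by
  refine le_trans ?_ (hf.exp_mul_le htt')
  gcongr
  linarith

lemma intervalIntegrable (hf : ExpMonotone s f) (a b : ℝ) : IntervalIntegrable f volume a b := by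
  have h : IntervalIntegrable (fun t => Real.exp (-(s * t)) * (Real.exp (s * t) * f t))
      volume a b :=
    (Monotone.intervalIntegrable hf).continuousOn_mul (by fun_prop)
  simpa only [← mul_assoc, ← Real.exp_add, neg_add_cancel, Real.exp_zero, one_mul] using h

lemma mul_le_integral (hf : ExpMonotone s f) (hs : 0 ≤ s) (hf_nonneg : 0 ≤ f t) (hb : 0 ≤ b) :
    b * (Real.exp (-(s * b)) * f t) ≤ ∫ τ in t..t + b, f τ := by
  have h := intervalIntegral.integral_mono_on (le_add_of_nonneg_right hb)
    (intervalIntegrable_const (c := Real.exp (-(s * b)) * f t)) (hf.intervalIntegrable t (t + b))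
    fun τ hτ => hf.exp_mul_le_of_le_add hs hf_nonneg hτ.1 hτ.2
  rwa [intervalIntegral.integral_const, add_sub_cancel_left, smul_eq_mul] at h

lemma exp_mul_integral_le (hf : ExpMonotone s f) (hs : 0 ≤ s) (hf_nonneg : ∀ t, 0 ≤ f t)
    (hb : 0 ≤ b) : Real.exp (-(s * b)) * ∫ τ in t..t + b, f τ ≤ b * f (t + b) := by
  rw [← intervalIntegral.integral_const_mul]
  have h := intervalIntegral.integral_mono_on (le_add_of_nonneg_right hb)
    ((hf.intervalIntegrable t (t + b)).const_mul (Real.exp (-(s * b))))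
    (intervalIntegrable_const (c := f (t + b)))
    fun τ hτ => hf.exp_mul_le_of_le_add hs (hf_nonneg τ) hτ.2 (by linarith [hτ.1])
  simpa using h

lemma tendsto_zero_of_integrableOn (hf : ExpMonotone s f) (hs : 0 ≤ s) (hf_nonneg : ∀ t, 0 ≤ f t)
    (hf_int : IntegrableOn f (Ioi 0)) : Tendsto f atTop (𝓝 0) := by
  have hlim := intervalIntegral_tendsto_integral_Ioi 0 hf_int tendsto_id
  have hwindow : Tendsto (fun t => ∫ τ in t..t + 1, f τ) atTop (𝓝 0) := by
    have h := (hlim.comp (tendsto_atTop_add_const_right atTop 1 tendsto_id)).sub hlim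
    rw [sub_self] at h
    refine h.congr fun t => ?_
    exact intervalIntegral.integral_interval_sub_left (hf.intervalIntegrable _ _)
      (hf.intervalIntegrable _ _)
  have hupper : ∀ t, f t ≤ Real.exp s * ∫ τ in t..t + 1, f τ := fun t => by
    have h := hf.mul_le_integral hs (hf_nonneg t) zero_le_one
    rw [one_mul, mul_one] at h
    rwa [← inv_mul_le_iff₀ (Real.exp_pos s), ← Real.exp_neg]
  exact squeeze_zero hf_nonneg hupper (by simpa using hwindow.const_mul (Real.exp s))

end ExpMonotone

namespace DelayGraph

variable {V E : Type*} [Fintype E] [DecidableEq V]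

/-- The functions `Z i` are non-negative subsolutions, with errors `g i`, of the renewal equations
`(∑ e, w e) * Z i t = ∑ e, w e * Z (term e) (t - delay e)`, the sums running over the edges out of
`i`. The weights `w` form a positive circulation (Kirchhoff's law), as happens after normalising by
Perron-Frobenius eigenvectors, and the regularity of the `Z i` is the one of `ExpMonotone`. -/
structure IsSubrenewal (D : DelayGraph V E) (s : ℝ) (w : E → ℝ) (Z g : V → ℝ → ℝ) : Prop where
  s_nonneg : 0 ≤ s
  w_pos : ∀ e, 0 < w e
  sum_init_eq_sum_term : ∀ i, ∑ e with D.init e = i, w e = ∑ e with D.term e = i, w e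
  nonneg : ∀ i t, 0 ≤ Z i t
  expMonotone : ∀ i, ExpMonotone s (Z i)
  sum_le : ∀ i t, ∑ e with D.init e = i, w e * (Z i t - Z (D.term e) (t - D.delay e)) ≤ g i t
  g_nonneg : ∀ i t, 0 ≤ g i t
  g_integrableOn : ∀ i, IntegrableOn (g i) (Ioi 0)
  g_tendsto : ∀ i, Tendsto (g i) atTop (𝓝 0)

/-- The total mass which flows along the edges of `D` at time `t`, when a particle that enters the
edge `e` leaves it `delay e` later. It is conserved by solutions of the renewal equations. -/
def flux (D : DelayGraph V E) (w : E → ℝ) (Z : V → ℝ → ℝ) (t : ℝ) : ℝ :=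
  ∑ e, w e * ∫ τ in t - D.delay e..t, Z (D.term e) τ

namespace IsSubrenewal

variable {D : DelayGraph V E} {s : ℝ} {w : E → ℝ} {Z g : V → ℝ → ℝ}

section Flux

lemma sum_term_le [Fintype V] (h : D.IsSubrenewal s w Z g) (t : ℝ) :
    ∑ e, w e * (Z (D.term e) t - Z (D.term e) (t - D.delay e)) ≤ ∑ i, g i t := by
  have hterm : ∑ e, w e * Z (D.term e) t = ∑ e, w e * Z (D.init e) t := by
    rw [← Finset.sum_fiberwise Finset.univ D.term, ← Finset.sum_fiberwise Finset.univ D.init]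
    refine Finset.sum_congr rfl fun i _ => ?_
    rw [Finset.sum_congr rfl fun e he => by rw [(Finset.mem_filter.1 he).2],
      Finset.sum_congr rfl fun e (he : e ∈ ({e | D.init e = i} : Finset E)) => by
        rw [(Finset.mem_filter.1 he).2],
      ← Finset.sum_mul, ← Finset.sum_mul, h.sum_init_eq_sum_term]
  calc ∑ e, w e * (Z (D.term e) t - Z (D.term e) (t - D.delay e))
      = ∑ e, w e * (Z (D.init e) t - Z (D.term e) (t - D.delay e)) := by
        simp only [mul_sub, Finset.sum_sub_distrib, hterm]
    _ = ∑ i, ∑ e with D.init e = i, w e * (Z i t - Z (D.term e) (t - D.delay e)) := by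
        rw [← Finset.sum_fiberwise Finset.univ D.init]
        refine Finset.sum_congr rfl fun i _ => Finset.sum_congr rfl fun e he => ?_
        rw [(Finset.mem_filter.1 he).2]
    _ ≤ ∑ i, g i t := Finset.sum_le_sum fun i _ => h.sum_le i t

lemma integrableOn_sum [Fintype V] (h : D.IsSubrenewal s w Z g) {a : ℝ} (ha : 0 ≤ a) :
    IntegrableOn (fun t => ∑ i, g i t) (Ioi a) :=
  integrable_finsetSum _ fun i _ => (h.g_integrableOn i).mono_set (Ioi_subset_Ioi ha)

lemma flux_sub_flux (h : D.IsSubrenewal s w Z g) (a b : ℝ) :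
    D.flux w Z b - D.flux w Z a =
      ∫ t in a..b, ∑ e, w e * (Z (D.term e) t - Z (D.term e) (t - D.delay e)) := by
  have hZ : ∀ i a b, IntervalIntegrable (Z i) volume a b :=
    fun i => (h.expMonotone i).intervalIntegrable
  have hshift : ∀ e, IntervalIntegrable (fun t => Z (D.term e) (t - D.delay e)) volume a b :=
    fun e => by
      simpa using (hZ (D.term e) (a - D.delay e) (b - D.delay e)).comp_sub_right (D.delay e)
  rw [intervalIntegral.integral_finsetSum fun e _ => ((hZ _ a b).sub (hshift e)).const_mul _,
    flux, flux, ← Finset.sum_sub_distrib]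
  refine Finset.sum_congr rfl fun e _ => ?_
  rw [intervalIntegral.integral_const_mul, ← mul_sub,
    intervalIntegral.integral_sub (hZ _ a b) (hshift e),
    intervalIntegral.integral_comp_sub_right (fun t => Z (D.term e) t),
    intervalIntegral.integral_interval_sub_interval_comm' (hZ _ _ _) (hZ _ _ _) (hZ _ _ _)]

lemma flux_le_flux_add [Fintype V] (h : D.IsSubrenewal s w Z g) {a b : ℝ} (ha : 0 ≤ a)
    (hab : a ≤ b) :
    D.flux w Z b ≤ D.flux w Z a + ∫ t in Ioi a, ∑ i, g i t := by
  have hZ : ∀ e, IntervalIntegrable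
      (fun t => w e * (Z (D.term e) t - Z (D.term e) (t - D.delay e))) volume a b := fun e => by
    have hi : ∀ a b, IntervalIntegrable (Z (D.term e)) volume a b :=
      (h.expMonotone _).intervalIntegrable
    simpa using ((hi a b).sub (by simpa using
      (hi (a - D.delay e) (b - D.delay e)).comp_sub_right (D.delay e))).const_mul (w e)
  have hg := h.integrableOn_sum ha
  rw [← sub_le_iff_le_add', h.flux_sub_flux]
  calc ∫ t in a..b, ∑ e, w e * (Z (D.term e) t - Z (D.term e) (t - D.delay e))
      ≤ ∫ t in a..b, ∑ i, g i t :=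
        intervalIntegral.integral_mono_on hab (by
          simpa [Finset.sum_fn] using IntervalIntegrable.sum Finset.univ fun e _ => hZ e)
          ((intervalIntegrable_iff_integrableOn_Ioc_of_le hab).2
            (hg.mono_set Ioc_subset_Ioi_self)) fun t _ => h.sum_term_le t
    _ ≤ ∫ t in Ioi a, ∑ i, g i t := by
        rw [intervalIntegral.integral_of_le hab]
        exact setIntegral_mono_set hg
          (.of_forall fun t => Finset.sum_nonneg fun i _ => h.g_nonneg i t)
          Ioc_subset_Ioi_self.eventuallyLE

lemma eventually_lt_flux [Finite V] (h : D.IsSubrenewal s w Z g) {q q' : ℝ} (hqq' : q < q')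
    (hq' : ∃ᶠ t in atTop, q' < D.flux w Z t) : ∀ᶠ t in atTop, q < D.flux w Z t := by
  cases nonempty_fintype V
  filter_upwards [eventually_ge_atTop 0, (tendsto_integral_Ioi_zero tendsto_id).eventually
    (gt_mem_nhds (sub_pos.2 hqq'))] with t ht hgt
  obtain ⟨b, hb, htb⟩ := (hq'.and_eventually (eventually_ge_atTop t)).exists
  have := h.flux_le_flux_add ht htb
  rw [id] at hgt
  linarith

lemma mul_integral_le_flux (h : D.IsSubrenewal s w Z g) (e : E) (t : ℝ) :
    w e * ∫ τ in t - D.delay e..t, Z (D.term e) τ ≤ D.flux w Z t := by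
  refine Finset.single_le_sum (f := fun e => w e * ∫ τ in t - D.delay e..t, Z (D.term e) τ)
    (fun e _ => mul_nonneg (h.w_pos e).le ?_) (Finset.mem_univ e)
  exact intervalIntegral.integral_nonneg (by linarith [D.delay_pos e]) fun τ _ => h.nonneg _ τ

lemma isBoundedUnder_le [Finite V] (h : D.IsSubrenewal s w Z g) (hSC : D.StronglyConnected)
    (j : V) :
    IsBoundedUnder (· ≤ ·) atTop (Z j) := by
  cases nonempty_fintype V
  obtain ⟨e, rfl⟩ := hSC.exists_term_eq j
  set c := w e * (D.delay e * Real.exp (-(s * D.delay e)))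
  have hc : 0 < c := mul_pos (h.w_pos e) (mul_pos (D.delay_pos e) (Real.exp_pos _))
  refine isBoundedUnder_of_eventually_le
    (a := (D.flux w Z 0 + ∫ t in Ioi 0, ∑ i, g i t) / c) ?_
  filter_upwards [eventually_ge_atTop 0] with t ht
  rw [le_div_iff₀' hc]
  calc c * Z (D.term e) t
      = w e * (D.delay e * (Real.exp (-(s * D.delay e)) * Z (D.term e) t)) := by ring
    _ ≤ w e * ∫ τ in t..t + D.delay e, Z (D.term e) τ := by
        gcongr
        · exact (h.w_pos e).le
        · exact (h.expMonotone _).mul_le_integral h.s_nonneg (h.nonneg _ t) (D.delay_pos e).le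
    _ ≤ D.flux w Z (t + D.delay e) := by
        simpa using h.mul_integral_le_flux e (t + D.delay e)
    _ ≤ _ := h.flux_le_flux_add le_rfl (by linarith [D.delay_pos e])

end Flux

section UpperLimit

variable {M : ℝ} {F : Filter ℝ}

-- `M` is the largest of the upper limits of the `Z i`.
lemma exists_ultrafilter_tendsto [Finite V] [Nonempty V] (h : D.IsSubrenewal s w Z g)
    (hSC : D.StronglyConnected) :
    ∃ M i, (∀ b > M, ∀ᶠ t in atTop, ∀ j, Z j t < b) ∧
      ∃ F : Ultrafilter ℝ, (F : Filter ℝ) ≤ atTop ∧ Tendsto (Z i) (F : Filter ℝ) (𝓝 M) := by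
  obtain ⟨i, hi⟩ := Finite.exists_max fun i => limsup (Z i) atTop
  have hcob : IsCoboundedUnder (· ≤ ·) atTop (Z i) :=
    (isBoundedUnder_of ⟨0, h.nonneg i⟩ : IsBoundedUnder (· ≥ ·) atTop (Z i)).isCoboundedUnder_le
  refine ⟨limsup (Z i) atTop, i, fun b hb => eventually_all.2 fun j => ?_, ?_⟩
  · exact eventually_lt_of_limsup_lt ((hi j).trans_lt hb) (h.isBoundedUnder_le hSC j)
  · exact mapClusterPt_iff_ultrafilter.1
      (isGreatest_mapClusterPt_limsup hcob (h.isBoundedUnder_le hSC i)).1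

lemma mul_sub_le (h : D.IsSubrenewal s w Z g) (e : E) {b t : ℝ}
    (hb : ∀ e', Z (D.term e') (t - D.delay e') ≤ b) :
    w e * (b - Z (D.term e) (t - D.delay e)) ≤ g (D.init e) t +
      (∑ e' with D.init e' = D.init e, w e') * (b - Z (D.init e) t) := by
  calc w e * (b - Z (D.term e) (t - D.delay e))
      ≤ ∑ e' with D.init e' = D.init e, w e' * (b - Z (D.term e') (t - D.delay e')) :=
        Finset.single_le_sum (f := fun e' => w e' * (b - Z (D.term e') (t - D.delay e')))
          (fun e' _ => mul_nonneg (h.w_pos e').le (sub_nonneg.2 (hb e'))) (by simp)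
    _ = ∑ e' with D.init e' = D.init e,
          w e' * (Z (D.init e) t - Z (D.term e') (t - D.delay e')) +
        (∑ e' with D.init e' = D.init e, w e') * (b - Z (D.init e) t) := by
        rw [Finset.sum_mul, ← Finset.sum_add_distrib]
        exact Finset.sum_congr rfl fun e' _ => by ring
    _ ≤ _ := by gcongr; exact h.sum_le _ t

-- A weighted average of quantities below `M` can be near `M` only if each of them is.
lemma tendsto_term (h : D.IsSubrenewal s w Z g) (hM : ∀ b > M, ∀ᶠ t in atTop, ∀ j, Z j t < b)
    (hF : F ≤ atTop) (e : E) (he : Tendsto (Z (D.init e)) F (𝓝 M)) :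
    Tendsto (fun t => Z (D.term e) (t - D.delay e)) F (𝓝 M) := by
  have hshift : ∀ e', Tendsto (fun t => t - D.delay e') F atTop := fun e' =>
    (tendsto_atTop_add_const_right _ _ tendsto_id).mono_left hF
  refine tendsto_order.2 ⟨fun a ha => ?_, fun a ha =>
    ((hshift e).eventually (hM a ha)).mono fun t ht => ht (D.term e)⟩
  set W := ∑ e' with D.init e' = D.init e, w e'
  obtain ⟨b, hMb, hb⟩ : ∃ b > M, 0 + W * (b - M) < w e * (b - a) :=
    Eventually.exists_gt <| Tendsto.eventually_lt (f := fun b => 0 + W * (b - M))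
      (g := fun b => w e * (b - a)) (Continuous.tendsto (by fun_prop) M)
      (Continuous.tendsto (by fun_prop) M)
      (by simpa using mul_pos (h.w_pos e) (sub_pos.2 ha))
  have hlim : Tendsto (fun t => g (D.init e) t + W * (b - Z (D.init e) t)) F
      (𝓝 (0 + W * (b - M))) :=
    ((h.g_tendsto _).mono_left hF).add ((he.const_sub b).const_mul W)
  filter_upwards [hlim.eventually_lt_const hb,
    eventually_all.2 fun e' => (hshift e').eventually (hM b hMb)] with t ht htb
  have hlt := (h.mul_sub_le e fun e' => (htb e' _).le).trans_lt ht
  linarith [lt_of_mul_lt_mul_left hlt (h.w_pos e).le]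

lemma tendsto_of_hasWalk (h : D.IsSubrenewal s w Z g)
    (hM : ∀ b > M, ∀ᶠ t in atTop, ∀ j, Z j t < b) {i j : V} {ℓ : ℝ} (hw : D.HasWalk i j ℓ)
    (hF : F ≤ atTop) (hi : Tendsto (Z i) F (𝓝 M)) : Tendsto (fun t => Z j (t - ℓ)) F (𝓝 M) := by
  induction hw generalizing F with
  | nil => simpa using hi
  | cons e _ ih =>
    have hshift : Tendsto (fun t => t - D.delay e) F atTop :=
      (tendsto_atTop_add_const_right _ _ tendsto_id).mono_left hF
    have := tendsto_map'_iff.1 (ih (F := F.map fun t => t - D.delay e) hshift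
      (tendsto_map'_iff.2 (h.tendsto_term hM hF e hi)))
    simpa only [Function.comp_def, sub_sub] using this

lemma exists_forall_eventually_prod [Finite V] (h : D.IsSubrenewal s w Z g)
    (hSC : D.StronglyConnected) (hD : D.Nonlattice) (hM : ∀ b > M, ∀ᶠ t in atTop, ∀ j, Z j t < b)
    (hF : F ≤ atTop) {i : V} (hi : Tendsto (Z i) F (𝓝 M)) {c : ℝ} (hc : c < M) :
    ∃ R, ∀ σ ≥ R, ∀ j, ∀ᶠ p : ℝ × ℝ in F ×ˢ 𝓝 σ, c < Z j (p.1 - p.2) := by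
  obtain ⟨c', hcc', hc'M⟩ := exists_between hc
  obtain ⟨ε, hε, hεc⟩ : ∃ ε > 0, c < Real.exp (-(s * ε)) * c' :=
    Eventually.exists_gt <| (Continuous.tendsto (f := fun ε => Real.exp (-(s * ε)) * c')
      (by fun_prop) 0).eventually_const_lt (by simpa using hcc')
  obtain ⟨R, hR⟩ := eventually_atTop.1 <| eventually_all.2 fun j =>
    hD.eventually_exists_hasWalk hSC i j hε
  refine ⟨R, fun σ hσ j => ?_⟩
  obtain ⟨ℓ, hℓ, hw⟩ := hR σ hσ j
  filter_upwards [((h.tendsto_of_hasWalk hM hw hF hi).eventually_const_lt hc'M).prod_mk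
    (Ioo_mem_nhds (show ℓ - ε < σ by linarith [hℓ.2]) hℓ.1)] with ⟨t, σ'⟩ ⟨ht, hσ'⟩
  calc c < Real.exp (-(s * ε)) * c' := hεc
    _ ≤ Real.exp (-(s * ε)) * Z j (t - ℓ) := by gcongr
    _ ≤ Z j (t - σ') := (h.expMonotone j).exp_mul_le_of_le_add h.s_nonneg (h.nonneg _ _)
        (by linarith [hσ'.2]) (by linarith [hσ'.1])

lemma exists_eventually_forall_mem_Icc [Finite V] (h : D.IsSubrenewal s w Z g)
    (hSC : D.StronglyConnected) (hD : D.Nonlattice) (hM : ∀ b > M, ∀ᶠ t in atTop, ∀ j, Z j t < b)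
    (hF : F ≤ atTop) {i : V} (hi : Tendsto (Z i) F (𝓝 M)) {c : ℝ} (hc : c < M) (L : ℝ) :
    ∃ R, ∀ᶠ t in F, ∀ σ ∈ Icc R (R + L), ∀ j, c < Z j (t - σ) := by
  obtain ⟨R, hR⟩ := h.exists_forall_eventually_prod hSC hD hM hF hi hc
  have hK : {p : ℝ × ℝ | ∀ j, c < Z j (p.1 - p.2)} ∈ F ×ˢ 𝓝ˢ (Icc R (R + L)) :=
    isCompact_Icc.mem_prod_nhdsSet_of_forall fun σ hσ => eventually_all.2 (hR σ hσ.1)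
  exact ⟨R, eventually_prod_principal_iff.1 (prod_mono le_rfl principal_le_nhdsSet hK)⟩

end UpperLimit

section Convergence

variable {M : ℝ}

lemma mul_sum_le_flux (h : D.IsSubrenewal s w Z g) {c L t : ℝ} (hL : ∀ e, D.delay e ≤ L)
    (hc : ∀ τ ∈ Icc (t - L) t, ∀ j, c ≤ Z j τ) : c * ∑ e, w e * D.delay e ≤ D.flux w Z t := by
  rw [Finset.mul_sum]
  refine Finset.sum_le_sum fun e _ => ?_
  have hint := intervalIntegral.integral_mono_on (by linarith [D.delay_pos e])
    (intervalIntegrable_const (c := c)) ((h.expMonotone (D.term e)).intervalIntegrable _ _)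
    fun τ (hτ : τ ∈ Icc (t - D.delay e) t) => hc τ ⟨by linarith [hτ.1, hL e], hτ.2⟩ (D.term e)
  rw [intervalIntegral.integral_const, sub_sub_cancel, smul_eq_mul] at hint
  calc c * (w e * D.delay e) = w e * (D.delay e * c) := by ring
    _ ≤ _ := mul_le_mul_of_nonneg_left hint (h.w_pos e).le

-- Near the times where some `Z i` approaches its supremum `M`, all `Z j` are close to `M` during
-- a whole window, hence the flux is close to its largest possible value.
lemma eventually_lt_flux_of_lt_mul [Finite V] (h : D.IsSubrenewal s w Z g)
    (hSC : D.StronglyConnected) (hD : D.Nonlattice)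
    (hM : ∀ b > M, ∀ᶠ t in atTop, ∀ j, Z j t < b) {F : Filter ℝ} [F.NeBot] (hF : F ≤ atTop) {i : V}
    (hi : Tendsto (Z i) F (𝓝 M)) {q : ℝ} (hq : q < M * ∑ e, w e * D.delay e) :
    ∀ᶠ t in atTop, q < D.flux w Z t := by
  set μ := ∑ e, w e * D.delay e
  obtain ⟨q', hqq', hq'⟩ := exists_between hq
  obtain ⟨c, hcM, hc⟩ : ∃ c < M, q' < c * μ :=
    Eventually.exists_lt <| (Continuous.tendsto (f := fun c => c * μ)
      (by fun_prop) M).eventually_const_lt hq'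
  obtain ⟨L, hL⟩ := (finite_range D.delay).bddAbove
  obtain ⟨R, hR⟩ := h.exists_eventually_forall_mem_Icc hSC hD hM hF hi hcM L
  have hflux : ∀ᶠ t in F, q' < D.flux w Z (t - R) := hR.mono fun t ht =>
    hc.trans_le <| h.mul_sum_le_flux (fun e => hL ⟨e, rfl⟩) fun τ hτ j => by
      simpa using (ht (t - τ) ⟨by linarith [hτ.2], by linarith [hτ.1]⟩ j).le
  have hshift : Tendsto (fun t => t - R) F atTop :=
    (tendsto_atTop_add_const_right _ _ tendsto_id).mono_left hF
  exact h.eventually_lt_flux hqq' (hshift.frequently hflux.frequently)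

lemma mul_sub_integral_le (h : D.IsSubrenewal s w Z g) (e : E) {b c L t : ℝ}
    (hb_nonneg : 0 ≤ b) (hb : b ≤ D.delay e) (hL : ∀ e, D.delay e ≤ L)
    (hc : ∀ τ ∈ Icc (t - L) t, ∀ j, Z j τ ≤ c) :
    w e * (b * c - ∫ τ in t - b..t, Z (D.term e) τ) ≤
      c * ∑ e, w e * D.delay e - D.flux w Z t := by
  have hint : ∀ i a a', ∫ τ in a..a', (c - Z i τ) = (a' - a) * c - ∫ τ in a..a', Z i τ :=
    fun i a a' => by
      rw [intervalIntegral.integral_sub intervalIntegrable_const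
        ((h.expMonotone i).intervalIntegrable a a'), intervalIntegral.integral_const, smul_eq_mul]
  have hnonneg : ∀ e', ∀ τ ∈ Icc (t - D.delay e') t, 0 ≤ c - Z (D.term e') τ := fun e' τ hτ =>
    sub_nonneg.2 (hc τ ⟨by linarith [hτ.1, hL e'], hτ.2⟩ _)
  have hdelay : ∀ e', t - D.delay e' ≤ t := fun e' => by linarith [D.delay_pos e']
  calc w e * (b * c - ∫ τ in t - b..t, Z (D.term e) τ)
      = w e * ∫ τ in t - b..t, (c - Z (D.term e) τ) := by rw [hint, sub_sub_cancel]
    _ ≤ w e * ∫ τ in t - D.delay e..t, (c - Z (D.term e) τ) := by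
        have hle := intervalIntegral.integral_mono_interval (sub_le_sub_left hb t)
          (sub_le_self t hb_nonneg) le_rfl
          ((ae_restrict_iff' measurableSet_Ioc).2
            (.of_forall fun τ hτ => hnonneg e τ (Ioc_subset_Icc_self hτ)))
          (intervalIntegrable_const.sub ((h.expMonotone (D.term e)).intervalIntegrable _ _))
        exact mul_le_mul_of_nonneg_left hle (h.w_pos e).le
    _ ≤ ∑ e', w e' * ∫ τ in t - D.delay e'..t, (c - Z (D.term e') τ) :=
        Finset.single_le_sum (f := fun e' => w e' * ∫ τ in t - D.delay e'..t, (c - Z (D.term e') τ))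
          (fun e' _ => mul_nonneg (h.w_pos e').le
            (intervalIntegral.integral_nonneg (hdelay e') (hnonneg e'))) (Finset.mem_univ e)
    _ = _ := by
        simp only [hint, sub_sub_cancel, mul_sub, Finset.sum_sub_distrib, flux, Finset.mul_sum]
        congr 1
        exact Finset.sum_congr rfl fun e _ => by ring

lemma eventually_lt_integral (h : D.IsSubrenewal s w Z g)
    (hM : ∀ b > M, ∀ᶠ t in atTop, ∀ j, Z j t < b)
    (hflux : ∀ q < M * ∑ e, w e * D.delay e, ∀ᶠ t in atTop, q < D.flux w Z t) (e : E) {b q : ℝ}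
    (hb_nonneg : 0 ≤ b) (hb : b ≤ D.delay e) (hq : q < b * M) :
    ∀ᶠ t in atTop, q < ∫ τ in t - b..t, Z (D.term e) τ := by
  set μ := ∑ e, w e * D.delay e
  obtain ⟨c, hMc, hc⟩ : ∃ c > M, c * μ - w e * (b * c - q) < M * μ :=
    Eventually.exists_gt <| (Continuous.tendsto (f := fun c => c * μ - w e * (b * c - q))
      (by fun_prop) M).eventually_lt_const
      (sub_lt_self _ (mul_pos (h.w_pos e) (sub_pos.2 hq)))
  obtain ⟨L, hL⟩ := (finite_range D.delay).bddAbove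
  obtain ⟨T, hT⟩ := eventually_atTop.1 (hM c hMc)
  filter_upwards [eventually_ge_atTop (T + L), hflux _ hc] with t ht hlt
  have hle := h.mul_sub_integral_le e hb_nonneg hb (fun e => hL ⟨e, rfl⟩) (t := t) (c := c)
    fun τ hτ j => (hT τ (by linarith [hτ.1]) j).le
  have : w e * (b * c - ∫ τ in t - b..t, Z (D.term e) τ) < w e * (b * c - q) := by linarith
  linarith [lt_of_mul_lt_mul_left this (h.w_pos e).le]

theorem exists_tendsto [Finite V] [Nonempty V] (h : D.IsSubrenewal s w Z g)
    (hSC : D.StronglyConnected) (hD : D.Nonlattice) : ∃ M, ∀ i, Tendsto (Z i) atTop (𝓝 M) := by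
  obtain ⟨M, i, hM, F, hF, hi⟩ := h.exists_ultrafilter_tendsto hSC
  refine ⟨M, fun j => tendsto_order.2 ⟨fun a ha => ?_, fun a ha => (hM a ha).mono fun t ht => ht j⟩⟩
  obtain ⟨e, rfl⟩ := hSC.exists_term_eq j
  obtain ⟨a', haa', ha'M⟩ := exists_between ha
  obtain ⟨b, hb, hb_pos, hb_le⟩ : ∃ b, a < Real.exp (-(s * b)) * a' ∧ b ∈ Ioc 0 (D.delay e) :=
    ((((Continuous.tendsto (f := fun b => Real.exp (-(s * b)) * a') (by fun_prop) 0).mono_left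
      nhdsWithin_le_nhds).eventually_const_lt (by simpa using haa')).and
        (Ioc_mem_nhdsGT (D.delay_pos e))).exists
  have hint := h.eventually_lt_integral hM
    (fun q => h.eventually_lt_flux_of_lt_mul hSC hD hM hF hi) e hb_pos.le hb_le
    (mul_lt_mul_of_pos_left ha'M hb_pos)
  filter_upwards [hint] with t ht
  have hle := (h.expMonotone (D.term e)).exp_mul_integral_le h.s_nonneg (h.nonneg _) hb_pos.le
    (t := t - b)
  rw [sub_add_cancel] at hle
  refine hb.trans (lt_of_mul_lt_mul_left (lt_of_lt_of_le ?_ hle) hb_pos.le)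
  calc b * (Real.exp (-(s * b)) * a') = Real.exp (-(s * b)) * (b * a') := by ring
    _ < _ := by gcongr

end Convergence

end IsSubrenewal

end DelayGraph

lemma expMonotone_exp_neg_mul {f : ℝ → ℝ} (hf : Monotone f) (s : ℝ) :
    ExpMonotone s fun t => Real.exp (-(s * t)) * f t := by
  simpa only [ExpMonotone, ← mul_assoc, ← Real.exp_add, add_neg_cancel, Real.exp_zero, one_mul]
    using hf

lemma ExpMonotone.const_mul {s a : ℝ} {f : ℝ → ℝ} (hf : ExpMonotone s f) (ha : 0 ≤ a) :
    ExpMonotone s fun t => a * f t := by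
  simpa only [ExpMonotone, mul_left_comm] using Monotone.const_mul hf ha

namespace DelayGraph

section RenewalTheorem

variable {V E : Type*} [Fintype E] [DecidableEq V] {D : DelayGraph V E} {s : ℝ} {u v : V → ℝ}
  {N c : V → ℝ → ℝ}

lemma isSubrenewal_of_le_sum_add (hs : 0 ≤ s) (hu_pos : ∀ i, 0 < u i) (hv_pos : ∀ i, 0 < v i)
    (hu : ∀ i, ∑ e with D.init e = i, Real.exp (-(s * D.delay e)) * u (D.term e) = u i)
    (hv : ∀ j, ∑ e with D.term e = j, v (D.init e) * Real.exp (-(s * D.delay e)) = v j)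
    (hN_nonneg : ∀ i t, 0 ≤ N i t) (hN_mono : ∀ i, Monotone (N i))
    (hN : ∀ i t, N i t ≤ ∑ e with D.init e = i, N (D.term e) (t - D.delay e) + c i t)
    (hc_nonneg : ∀ i t, 0 ≤ c i t) (hc_mono : ∀ i, Monotone (c i))
    (hc_int : ∀ i, IntegrableOn (fun t => Real.exp (-(s * t)) * c i t) (Ioi 0)) :
    D.IsSubrenewal s (fun e => v (D.init e) * (Real.exp (-(s * D.delay e)) * u (D.term e)))
      (fun i t => (u i)⁻¹ * (Real.exp (-(s * t)) * N i t))
      (fun i t => v i * (Real.exp (-(s * t)) * c i t)) where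
  s_nonneg := hs
  w_pos e := mul_pos (hv_pos _) (mul_pos (Real.exp_pos _) (hu_pos _))
  sum_init_eq_sum_term i := by
    calc ∑ e with D.init e = i, v (D.init e) * (Real.exp (-(s * D.delay e)) * u (D.term e))
        = v i * u i := by
          rw [← hu i, Finset.mul_sum]
          exact Finset.sum_congr rfl fun e he => by rw [(Finset.mem_filter.1 he).2]
      _ = _ := by
          rw [← hv i, Finset.sum_mul]
          exact Finset.sum_congr rfl fun e he => by rw [(Finset.mem_filter.1 he).2, mul_assoc]
  nonneg i t := mul_nonneg (inv_nonneg.2 (hu_pos i).le) (mul_nonneg (Real.exp_nonneg _)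
    (hN_nonneg i t))
  expMonotone i := (expMonotone_exp_neg_mul (hN_mono i) s).const_mul (inv_nonneg.2 (hu_pos i).le)
  sum_le i t := by
    have hterm : ∀ e ∈ ({e | D.init e = i} : Finset E),
        v (D.init e) * (Real.exp (-(s * D.delay e)) * u (D.term e)) *
          ((u i)⁻¹ * (Real.exp (-(s * t)) * N i t) - (u (D.term e))⁻¹ *
            (Real.exp (-(s * (t - D.delay e))) * N (D.term e) (t - D.delay e))) =
        v i * Real.exp (-(s * t)) * (Real.exp (-(s * D.delay e)) * u (D.term e) *
          ((u i)⁻¹ * N i t) - N (D.term e) (t - D.delay e)) := fun e he => by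
      have hu_ne := (hu_pos (D.term e)).ne'
      rw [(Finset.mem_filter.1 he).2,
        show -(s * t) = -(s * D.delay e) + -(s * (t - D.delay e)) by ring, Real.exp_add]
      field_simp
    have hu_ne := (hu_pos i).ne'
    rw [Finset.sum_congr rfl hterm, ← Finset.mul_sum, Finset.sum_sub_distrib, ← Finset.sum_mul,
      hu, mul_inv_cancel_left₀ hu_ne, ← mul_assoc]
    exact mul_le_mul_of_nonneg_left (sub_le_iff_le_add'.2 (hN i t))
      (mul_nonneg (hv_pos i).le (Real.exp_nonneg _))
  g_nonneg i t := mul_nonneg (hv_pos i).le (mul_nonneg (Real.exp_nonneg _) (hc_nonneg i t))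
  g_integrableOn i := (hc_int i).const_mul _
  g_tendsto i := by
    simpa using ((expMonotone_exp_neg_mul (hc_mono i) s).tendsto_zero_of_integrableOn hs
      (fun t => mul_nonneg (Real.exp_nonneg _) (hc_nonneg i t)) (hc_int i)).const_mul (v i)

theorem exists_tendsto_exp_neg_mul [Finite V] [Nonempty V] (hSC : D.StronglyConnected)
    (hD : D.Nonlattice) (hs : 0 ≤ s) (hu_pos : ∀ i, 0 < u i) (hv_pos : ∀ i, 0 < v i)
    (hu : ∀ i, ∑ e with D.init e = i, Real.exp (-(s * D.delay e)) * u (D.term e) = u i)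
    (hv : ∀ j, ∑ e with D.term e = j, v (D.init e) * Real.exp (-(s * D.delay e)) = v j)
    (hN_nonneg : ∀ i t, 0 ≤ N i t) (hN_mono : ∀ i, Monotone (N i))
    (hN : ∀ i t, N i t ≤ ∑ e with D.init e = i, N (D.term e) (t - D.delay e) + c i t)
    (hc_nonneg : ∀ i t, 0 ≤ c i t) (hc_mono : ∀ i, Monotone (c i))
    (hc_int : ∀ i, IntegrableOn (fun t => Real.exp (-(s * t)) * c i t) (Ioi 0)) :
    ∃ M, ∀ i, Tendsto (fun t => Real.exp (-(s * t)) * N i t) atTop (𝓝 (u i * M)) := by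
  obtain ⟨M, hM⟩ := (isSubrenewal_of_le_sum_add hs hu_pos hv_pos hu hv hN_nonneg hN_mono hN
    hc_nonneg hc_mono hc_int).exists_tendsto hSC hD
  refine ⟨M, fun i => ((hM i).const_mul (u i)).congr fun t => ?_⟩
  exact mul_inv_cancel_left₀ (hu_pos i).ne' _

end RenewalTheorem

section ComparisonPrinciple

variable {V E : Type*} [Fintype E] [DecidableEq V] {D : DelayGraph V E}

-- The recursion propagates the inequality from a window of length at least every delay.
lemma le_of_forall_mem_Icc {M : Type*} [AddCommMonoid M] [PartialOrder M] [IsOrderedAddMonoid M]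
    {f P : V → ℝ → M} {T b : ℝ} (hb : ∀ e, D.delay e ≤ b)
    (hf : ∀ i t, f i t ≤ ∑ e with D.init e = i, f (D.term e) (t - D.delay e))
    (hP : ∀ i t, ∑ e with D.init e = i, P (D.term e) (t - D.delay e) ≤ P i t)
    (hfP : ∀ t ∈ Icc T (T + b), ∀ i, f i t ≤ P i t) {t : ℝ} (ht : T ≤ t) (i : V) :
    f i t ≤ P i t := by
  obtain ⟨a, ha_pos, ha⟩ : ∃ a > 0, ∀ e, a ≤ D.delay e :=
    Eventually.exists_gt (eventually_all.2 fun e => eventually_le_nhds (D.delay_pos e))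
  have hstep : ∀ n : ℕ, ∀ t ∈ Icc T (T + b + n * a), ∀ i, f i t ≤ P i t := by
    intro n
    induction n with
    | zero => simpa using hfP
    | succ n ih =>
      intro t ht i
      rcases le_total t (T + b) with htb | htb
      · exact hfP t ⟨ht.1, htb⟩ i
      · refine (hf i t).trans (le_trans (Finset.sum_le_sum fun e _ => ih _ ?_ _) (hP i t))
        have ht_le : t ≤ T + b + (n + 1) * a := by exact_mod_cast ht.2
        constructor <;> linarith [ha e, hb e]
  obtain ⟨n, hn⟩ := exists_nat_ge ((t - (T + b)) / a)
  exact hstep n t ⟨ht, by linarith [(div_le_iff₀ ha_pos).1 hn]⟩ i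

lemma exists_pos_eventually_ofReal_le [Finite V] {s : ℝ} {u : V → ℝ} {P : V → ℝ → ℝ≥0∞}
    (hs : 0 ≤ s) (hu_nonneg : ∀ i, 0 ≤ u i)
    (hu : ∀ i, ∑ e with D.init e = i, Real.exp (-(s * D.delay e)) * u (D.term e) = u i)
    (hP : ∀ i t, ∑ e with D.init e = i, P (D.term e) (t - D.delay e) ≤ P i t)
    (hP_one : ∀ i, ∀ᶠ t in atTop, 1 ≤ P i t) :
    ∃ c > 0, ∀ᶠ t in atTop, ∀ i, ENNReal.ofReal (c * u i * Real.exp (s * t)) ≤ P i t := by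
  obtain ⟨T, hT⟩ := eventually_atTop.1 (eventually_all.2 hP_one)
  obtain ⟨b, hb⟩ := (finite_range D.delay).bddAbove
  obtain ⟨c, hc_pos, hc⟩ : ∃ c > 0, ∀ i, c * u i * Real.exp (s * (T + b)) ≤ 1 :=
    Eventually.exists_gt <| eventually_all.2 fun i => (Continuous.tendsto
      (f := fun c => c * u i * Real.exp (s * (T + b))) (by fun_prop) 0).eventually_le_const
        (by simp)
  refine ⟨c, hc_pos, (eventually_ge_atTop T).mono fun t ht i => ?_⟩
  refine D.le_of_forall_mem_Icc (f := fun i t => ENNReal.ofReal (c * u i * Real.exp (s * t)))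
    (fun e => hb ⟨e, rfl⟩) (fun i t => ?_) hP (fun t ht i => ?_) ht i
  · rw [← ENNReal.ofReal_sum_of_nonneg fun e _ => mul_nonneg (mul_nonneg hc_pos.le (hu_nonneg _))
      (Real.exp_nonneg _)]
    refine le_of_eq (congrArg _ ?_)
    rw [← hu i, Finset.mul_sum, Finset.sum_mul]
    refine Finset.sum_congr rfl fun e _ => ?_
    rw [show s * (t - D.delay e) = -(s * D.delay e) + s * t by ring, Real.exp_add]
    ring
  · refine le_trans ?_ (hT t ht.1 i)
    rw [ENNReal.ofReal_le_one]
    refine le_trans ?_ (hc i)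
    have := hu_nonneg i
    gcongr
    exact ht.2

end ComparisonPrinciple

end DelayGraph

namespace MWGraph

section DelayGraph

variable {d : ℕ} {V E : Type} [Fintype V] [Fintype E] (G : MWGraph d V E)

/-- The delay graph of a Mauldin–Williams graph: passing along `e` takes the time `-log (r e)`, so
that a path `γ` takes the time `-log r_γ`. -/
@[simps]
def delayGraph : DelayGraph V E where
  init := G.init
  term := G.term
  delay e := -Real.log (G.r e)
  delay_pos e := neg_pos.2 (Real.log_neg (G.r_pos e) (G.r_lt_one e))

lemma exp_neg_delay (e : E) : Real.exp (-G.delayGraph.delay e) = G.r e := by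
  rw [delayGraph_delay, neg_neg, Real.exp_log (G.r_pos e)]

lemma r_mul_exp_neg_sub_delay (e : E) (t : ℝ) :
    G.r e * Real.exp (-(t - G.delayGraph.delay e)) = Real.exp (-t) := by
  rw [← G.exp_neg_delay, ← Real.exp_add]
  ring_nf

lemma exp_neg_mul_delay (s : ℝ) (e : E) :
    Real.exp (-(s * G.delayGraph.delay e)) = G.r e ^ s := by
  rw [← G.exp_neg_delay, ← Real.exp_mul, neg_mul, mul_comm]

lemma pathRatio_pos (γ : List E) : 0 < G.pathRatio γ :=
  List.prod_pos (by simpa using fun e _ => G.r_pos e)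

variable {G}

lemma IsPathFrom.hasWalk {i : V} {γ : List E} (hγ : G.IsPathFrom i γ) :
    G.delayGraph.HasWalk i (G.pathTerm i γ) (-Real.log (G.pathRatio γ)) := by
  induction γ generalizing i with
  | nil => simpa [pathRatio, pathTerm] using DelayGraph.HasWalk.nil (D := G.delayGraph) i
  | cons e γ ih =>
    obtain ⟨rfl, hγ⟩ := hγ
    have hlog : -Real.log (G.pathRatio (e :: γ)) =
        G.delayGraph.delay e + -Real.log (G.pathRatio γ) := by
      rw [delayGraph_delay, ← neg_add, ← Real.log_mul (G.r_pos e).ne' (G.pathRatio_pos γ).ne']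
      rfl
    rw [hlog]
    exact .cons e (ih hγ)

lemma StronglyConnected.delayGraph (hG : G.StronglyConnected) :
    G.delayGraph.StronglyConnected := by
  intro i j
  obtain ⟨_ | ⟨e, γ⟩, hγ_ne, hγ, rfl⟩ := hG i j
  · exact absurd rfl hγ_ne
  · obtain ⟨rfl, hγ⟩ := hγ
    exact ⟨_, add_pos_of_pos_of_nonneg (G.delayGraph.delay_pos e) hγ.hasWalk.nonneg,
      .cons e hγ.hasWalk⟩

lemma nonlattice_delayGraph (hGM : G.GM = univ) : G.delayGraph.Nonlattice := by
  refine (dense_iff_closure_eq.2 hGM).mono (AddSubgroup.closure_mono ?_)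
  rintro _ ⟨i, γ, -, hγ, hγ_term, rfl⟩
  have hwalk := hγ.hasWalk
  rw [hγ_term] at hwalk
  exact ⟨i, hwalk⟩

end DelayGraph

section Amatrix

open scoped Matrix

variable {d : ℕ} {V E : Type} [Fintype V] [Fintype E] [DecidableEq V] {G : MWGraph d V E} {s : ℝ}

lemma Amatrix_nonneg (i j : V) : 0 ≤ G.Amatrix s i j :=
  Finset.sum_nonneg fun e _ => ite_nonneg (Real.rpow_nonneg (G.r_pos e).le s) le_rfl

lemma Amatrix_init_term_pos (e : E) : 0 < G.Amatrix s (G.init e) (G.term e) :=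
  Finset.sum_pos' (fun e _ => ite_nonneg (Real.rpow_nonneg (G.r_pos e).le s) le_rfl)
    ⟨e, Finset.mem_univ e, by simpa using Real.rpow_pos_of_pos (G.r_pos e) s⟩

lemma IsPathFrom.exists_path_length_eq {i : V} {γ : List E} (hγ : G.IsPathFrom i γ) :
    letI := (G.Amatrix s).toQuiver
    ∃ p : Quiver.Path i (G.pathTerm i γ), p.length = γ.length := by
  let _ := (G.Amatrix s).toQuiver
  induction γ generalizing i with
  | nil => exact ⟨.nil, rfl⟩
  | cons e γ ih =>
    obtain ⟨rfl, hγ⟩ := hγ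
    obtain ⟨p, hp⟩ := ih hγ
    refine ⟨(Quiver.Hom.toPath (PLift.up (Amatrix_init_term_pos e))).comp p, ?_⟩
    exact (Quiver.Path.length_comp _ p).trans (hp ▸ add_comm 1 γ.length)

lemma isIrreducible_Amatrix (hG : G.StronglyConnected) : (G.Amatrix s).IsIrreducible where
  nonneg := Amatrix_nonneg
  connected i j := by
    obtain ⟨γ, hγ_ne, hγ, rfl⟩ := hG i j
    obtain ⟨p, hp⟩ := hγ.exists_path_length_eq (s := s)
    exact ⟨p, hp ▸ List.length_pos_of_ne_nil hγ_ne⟩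

lemma Amatrix_mulVec (u : V → ℝ) (i : V) :
    (G.Amatrix s *ᵥ u) i = ∑ e with G.init e = i, G.r e ^ s * u (G.term e) := by
  simp only [Matrix.mulVec, dotProduct, Amatrix, Matrix.of_apply, Finset.sum_mul, ite_mul, zero_mul,
    ite_and]
  rw [Finset.sum_comm, Finset.sum_filter]
  exact Finset.sum_congr rfl fun e _ => by split_ifs <;> simp

lemma vecMul_Amatrix (v : V → ℝ) (j : V) :
    (v ᵥ* G.Amatrix s) j = ∑ e with G.term e = j, v (G.init e) * G.r e ^ s := by
  simp only [Matrix.vecMul, dotProduct, Amatrix, Matrix.of_apply, Finset.mul_sum, mul_ite, mul_zero,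
    and_comm (a := G.init _ = _), ite_and]
  rw [Finset.sum_comm, Finset.sum_filter]
  exact Finset.sum_congr rfl fun e _ => by split_ifs <;> simp

lemma exists_pos_sum_rpow_mul_eq [Nonempty V] (hG : G.StronglyConnected)
    (hs : matrixSpectralRadius (G.Amatrix s) = 1) :
    ∃ u : V → ℝ, (∀ i, 0 < u i) ∧
      ∀ i, ∑ e with G.init e = i, G.r e ^ s * u (G.term e) = u i := by
  obtain ⟨u, hu_pos, hu⟩ := exists_pos_mulVec_eq_smul (isIrreducible_Amatrix (s := s) hG)
  refine ⟨u, hu_pos, fun i => ?_⟩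
  rw [← Amatrix_mulVec, hu, hs, one_smul]

lemma exists_pos_sum_mul_rpow_eq [Nonempty V] (hG : G.StronglyConnected)
    (hs : matrixSpectralRadius (G.Amatrix s) = 1) :
    ∃ v : V → ℝ, (∀ j, 0 < v j) ∧
      ∀ j, ∑ e with G.term e = j, v (G.init e) * G.r e ^ s = v j := by
  obtain ⟨v, hv_pos, hv⟩ := exists_pos_vecMul_eq_smul (isIrreducible_Amatrix (s := s) hG)
  refine ⟨v, hv_pos, fun j => ?_⟩
  rw [← vecMul_Amatrix, hv, hs, one_smul]

end Amatrix

section Subset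

variable {d : ℕ} {V E : Type} [Fintype V] [Fintype E] {G : MWGraph d V E} {A B : V → Set (Pt d)}

lemma infDist_S_le {e : E} (hB : IsClosed (B (G.term e))) (hB_ne : (B (G.term e)).Nonempty)
    (hBS : MapsTo (G.S e) (B (G.term e)) (B (G.init e))) (x : Pt d) :
    infDist (G.S e x) (B (G.init e)) ≤ G.r e * infDist x (B (G.term e)) := by
  obtain ⟨y, hy, hxy⟩ := hB.exists_infDist_eq_dist hB_ne x
  rw [hxy, ← G.S_sim]
  exact infDist_le_dist_of_mem (hBS hy)

-- The largest distance of a point of some `A i` from `B i` is at most a proper fraction of itself.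
lemma subset_of_subset_iUnion_of_mapsTo (hA : ∀ i, IsCompact (A i))
    (hAS : ∀ i, A i ⊆ ⋃ e ∈ {e | G.init e = i}, G.S e '' A (G.term e))
    (hB : ∀ i, IsClosed (B i)) (hB_ne : ∀ i, (B i).Nonempty)
    (hBS : ∀ e, MapsTo (G.S e) (B (G.term e)) (B (G.init e))) (i : V) : A i ⊆ B i := by
  intro x hx
  have hcompact : IsCompact (⋃ i, Sigma.mk i '' A i : Set (Σ _ : V, Pt d)) :=
    isCompact_iUnion fun i => (hA i).image continuous_sigmaMk
  have hcont : Continuous fun p : Σ _ : V, Pt d => infDist p.2 (B p.1) :=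
    continuous_sigma fun i => continuous_infDist_pt (B i)
  have hmem {j : V} {y : Pt d} (hy : y ∈ A j) :
      (⟨j, y⟩ : Σ _ : V, Pt d) ∈ ⋃ i, Sigma.mk i '' A i := mem_iUnion.2 ⟨j, mem_image_of_mem _ hy⟩
  obtain ⟨_, hp, hmax⟩ := hcompact.exists_isMaxOn ⟨_, hmem hx⟩ hcont.continuousOn
  obtain ⟨j, y, hy, rfl⟩ := mem_iUnion.1 hp
  obtain ⟨e, rfl, z, hz, rfl⟩ := mem_iUnion₂.1 (hAS j hy)
  have hcontr : infDist (G.S e z) (B (G.init e)) ≤ G.r e * infDist (G.S e z) (B (G.init e)) :=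
    (infDist_S_le (hB _) (hB_ne _) (hBS e) z).trans
      (mul_le_mul_of_nonneg_left (hmax (hmem hz)) (G.r_pos e).le)
  have hnonpos : infDist (G.S e z) (B (G.init e)) ≤ 0 := by
    nlinarith [G.r_lt_one e]
  exact ((hB i).mem_iff_infDist_zero (hB_ne i)).2 (((hmax (hmem hx)).trans hnonpos).antisymm
    infDist_nonneg)

variable {C K KC : V → Set (Pt d)}

lemma IsInhomAttractor.mapsTo (hKC : G.IsInhomAttractor C KC) (e : E) :
    MapsTo (G.S e) (KC (G.term e)) (KC (G.init e)) := by
  intro x hx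
  rw [hKC.2.2]
  exact Or.inl (mem_iUnion₂.2 ⟨e, rfl, mem_image_of_mem _ hx⟩)

lemma IsAttractor.subset_isInhomAttractor (hK : G.IsAttractor K) (hKC : G.IsInhomAttractor C KC)
    (i : V) : K i ⊆ KC i :=
  subset_of_subset_iUnion_of_mapsTo hK.1 (fun i => (hK.2.2 i).subset) (fun i => (hKC.1 i).isClosed)
    hKC.2.1 hKC.mapsTo i

end Subset

section Counting

variable {d : ℕ} {V E : Type} [Fintype V] [Fintype E] {G : MWGraph d V E}
  {C K KC U : V → Set (Pt d)}

lemma lipschitzWith_S (e : E) : LipschitzWith (G.r e).toNNReal (G.S e) :=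
  .of_dist_le_mul fun x y => by rw [G.S_sim, Real.coe_toNNReal _ (G.r_pos e).le]

lemma innerPackingNumber_inv_mul_le_image_S (e : E) (ε : ℝ≥0) (A U : Set (Pt d)) :
    innerPackingNumber ((G.r e).toNNReal⁻¹ * ε) A U ≤
      innerPackingNumber ε (G.S e '' A) (G.S e '' U) := by
  have hr : 0 < (G.r e).toNNReal := Real.toNNReal_pos.2 (G.r_pos e)
  have hsim : ∀ x y, dist (G.S e x) (G.S e y) = (G.r e).toNNReal * dist x y := by
    simpa only [Real.coe_toNNReal _ (G.r_pos e).le] using G.S_sim e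
  have hle := innerPackingNumber_le_image hr hsim (surjective_of_dist_eq_mul hr hsim)
    ((G.r e).toNNReal⁻¹ * ε) A U
  rwa [mul_inv_cancel_left₀ hr.ne'] at hle

variable [DecidableEq V]

lemma IsInhomAttractor.coveringNumber_le (hKC : G.IsInhomAttractor C KC)
    (hC : ∀ i, IsCompact (C i)) (i : V) (t : ℝ) :
    coveringNumber (KC i) (Real.exp (-t)) ≤
      ∑ e with G.init e = i,
        coveringNumber (KC (G.term e)) (Real.exp (-(t - G.delayGraph.delay e))) +
      coveringNumber (C i) (Real.exp (-t)) := by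
  rw [← Nat.cast_le (α := ℕ∞), Nat.cast_add, Nat.cast_sum]
  simp only [coe_coveringNumber (hKC.1 _) (Real.exp_pos _),
    coe_coveringNumber (hC _) (Real.exp_pos _)]
  have hKC_i : KC i = (⋃ e ∈ ({e | G.init e = i} : Finset E), G.S e '' KC (G.term e)) ∪ C i := by
    simpa using hKC.2.2 i
  rw [hKC_i]
  refine (externalCoveringNumber_union_le _ _ _).trans ?_
  gcongr
  refine (externalCoveringNumber_biUnion_le _ _ _).trans (Finset.sum_le_sum fun e _ => ?_)
  rw [← G.r_mul_exp_neg_sub_delay e, Real.toNNReal_mul (G.r_pos e).le]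
  exact externalCoveringNumber_image_le (lipschitzWith_S e) _ _

lemma IsOSCWith.sum_innerPackingNumber_le (hU : G.IsOSCWith U)
    (hK : ∀ e, MapsTo (G.S e) (K (G.term e)) (K (G.init e))) (i : V) (ε : ℝ≥0) :
    ∑ e with G.init e = i, innerPackingNumber ((G.r e).toNNReal⁻¹ * ε)
        (K (G.term e)) (U (G.term e)) ≤ innerPackingNumber ε (K i) (U i) := by
  obtain ⟨-, -, -, -, hUS, hdisj⟩ := hU
  have hdisj_i : (({e | G.init e = i} : Finset E) : Set E).PairwiseDisjoint
      fun e => G.S e '' U (G.term e) := fun e he e' he' hne => hdisj e e'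
    ((Finset.mem_filter.1 he).2.trans (Finset.mem_filter.1 he').2.symm) hne
  calc ∑ e with G.init e = i, innerPackingNumber ((G.r e).toNNReal⁻¹ * ε)
        (K (G.term e)) (U (G.term e))
      ≤ ∑ e with G.init e = i, innerPackingNumber ε (G.S e '' K (G.term e))
          (G.S e '' U (G.term e)) :=
          Finset.sum_le_sum fun e _ => innerPackingNumber_inv_mul_le_image_S e ε _ _
    _ ≤ _ := sum_innerPackingNumber_le_of_pairwiseDisjoint _ hdisj_i
    _ ≤ innerPackingNumber ε (K i) (U i) := by
        refine innerPackingNumber_mono (iUnion₂_subset fun e he => ?_) ?_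
        · obtain rfl := (Finset.mem_filter.1 he).2
          exact (hK e).image_subset
        · simpa using hUS i

lemma IsOSCWith.sum_innerPackingNumber_two_mul_exp_neg_le (hU : G.IsOSCWith U)
    (hK : ∀ e, MapsTo (G.S e) (K (G.term e)) (K (G.init e))) (i : V) (t : ℝ) :
    ∑ e with G.init e = i,
      innerPackingNumber (2 * (Real.exp (-(t - G.delayGraph.delay e))).toNNReal)
        (K (G.term e)) (U (G.term e)) ≤
      innerPackingNumber (2 * (Real.exp (-t)).toNNReal) (K i) (U i) := by
  refine le_of_eq_of_le (Finset.sum_congr rfl fun e _ => ?_)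
    (hU.sum_innerPackingNumber_le hK i (2 * (Real.exp (-t)).toNNReal))
  rw [← G.r_mul_exp_neg_sub_delay e t, Real.toNNReal_mul (G.r_pos e).le, mul_left_comm 2,
    inv_mul_cancel_left₀ (Real.toNNReal_pos.2 (G.r_pos e)).ne']

lemma IsOSCWith.exists_pos_eventually_le_coveringNumber (hU : G.IsOSCWith U)
    (hK_compact : ∀ i, IsCompact (K i))
    (hK : ∀ e, MapsTo (G.S e) (K (G.term e)) (K (G.init e))) (hUK : ∀ i, (U i ∩ K i).Nonempty)
    {s : ℝ} (hs : 0 ≤ s) {u : V → ℝ} (hu_nonneg : ∀ i, 0 ≤ u i)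
    (hu : ∀ i, ∑ e with G.init e = i, G.r e ^ s * u (G.term e) = u i) :
    ∃ c > 0, ∀ᶠ t in atTop, ∀ i,
      c * u i * Real.exp (s * t) ≤ coveringNumber (K i) (Real.exp (-t)) := by
  have hradius : Tendsto (fun t : ℝ => 2 * (Real.exp (-t)).toNNReal) atTop (𝓝 0) := by
    simpa using (tendsto_real_toNNReal
      (Real.tendsto_exp_atBot.comp tendsto_neg_atTop_atBot)).const_mul 2
  have hle (i : V) (t : ℝ) : innerPackingNumber (2 * (Real.exp (-t)).toNNReal) (K i) (U i) ≤
      coveringNumber (K i) (Real.exp (-t)) := by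
    rw [coe_coveringNumber (hK_compact i) (Real.exp_pos _)]
    exact (innerPackingNumber_le_packingNumber _ _ _).trans
      (packingNumber_two_mul_le_externalCoveringNumber _ _)
  obtain ⟨c, hc_pos, hc⟩ := G.delayGraph.exists_pos_eventually_ofReal_le
    (P := fun i t =>
      ENat.toENNReal (innerPackingNumber (2 * (Real.exp (-t)).toNNReal) (K i) (U i)))
    hs hu_nonneg (by simpa only [exp_neg_mul_delay, delayGraph_init, delayGraph_term] using hu)
    (fun i t => (map_sum ENat.toENNRealRingHom _ _).symm.trans_le
      (ENat.toENNReal_mono (hU.sum_innerPackingNumber_two_mul_exp_neg_le hK i t)))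
    (fun i => (hradius.eventually (eventually_innerPackingNumber_pos (hU.2.1 i) (hUK i))).mono
      fun t ht => by exact_mod_cast Order.one_le_iff_pos.2 ht)
  refine ⟨c, hc_pos, hc.mono fun t ht i => ENNReal.ofReal_le_natCast.1 ((ht i).trans ?_)⟩
  exact_mod_cast ENat.toENNReal_mono (hle i t)

end Counting

section Asymptotics

lemma monotone_coveringNumber_exp_neg {d : ℕ} {A : Set (Pt d)} (hA : IsCompact A) :
    Monotone fun t : ℝ => (coveringNumber A (Real.exp (-t)) : ℝ) := fun _ _ ht =>
  Nat.mono_cast (coveringNumber_anti hA (Real.exp_pos _) (Real.exp_le_exp.2 (neg_le_neg ht)))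

lemma integrableOn_exp_neg_mul_coveringNumber {d : ℕ} {A : Set (Pt d)} {s : ℝ} {T : Set ℝ}
    (hA : IsCompact A)
    (hint : ∫⁻ t in T, ENNReal.ofReal
      (Real.exp (-s * t) * (coveringNumber A (Real.exp (-t)) : ℝ)) < ⊤) :
    IntegrableOn (fun t => Real.exp (-(s * t)) * (coveringNumber A (Real.exp (-t)) : ℝ)) T := by
  simp only [neg_mul] at hint
  refine (lintegral_ofReal_ne_top_iff_integrable ?_ ?_).1 hint.ne
  · exact ((by fun_prop : Measurable fun t : ℝ => Real.exp (-(s * t))).mul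
      (monotone_coveringNumber_exp_neg hA).measurable).aestronglyMeasurable
  · exact .of_forall fun t => by positivity

variable {d : ℕ} {V E : Type} [Fintype V] [Fintype E] [DecidableEq V] {G : MWGraph d V E}
  {C KC U : V → Set (Pt d)} {s : ℝ}

theorem IsInhomAttractor.exists_pos_tendsto_exp_neg_mul_coveringNumber [Nonempty V]
    (hKC : G.IsInhomAttractor C KC) (hC : ∀ i, IsCompact (C i)) (hG : G.StronglyConnected)
    (hU : G.IsOSCWith U) (hUKC : ∀ i, (U i ∩ KC i).Nonempty) (hs : IsS0 G s)
    (hint : ∀ i, ∫⁻ t in Ioi (0 : ℝ),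
      ENNReal.ofReal (Real.exp (-s * t) * (coveringNumber (C i) (Real.exp (-t)) : ℝ)) < ⊤)
    (hGM : G.GM = univ) :
    ∃ h : V → ℝ, (∀ i, 0 < h i) ∧ ∀ i, Tendsto
      (fun t => Real.exp (-(s * t)) * (coveringNumber (KC i) (Real.exp (-t)) : ℝ)) atTop
      (𝓝 (h i)) := by
  obtain ⟨u, hu_pos, hu⟩ := exists_pos_sum_rpow_mul_eq hG hs.2
  obtain ⟨v, hv_pos, hv⟩ := exists_pos_sum_mul_rpow_eq hG hs.2
  obtain ⟨M, hM⟩ := G.delayGraph.exists_tendsto_exp_neg_mul (v := v)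
    (N := fun i t => coveringNumber (KC i) (Real.exp (-t)))
    (c := fun i t => coveringNumber (C i) (Real.exp (-t))) hG.delayGraph
    (nonlattice_delayGraph hGM) hs.1 hu_pos hv_pos
    (by simpa only [exp_neg_mul_delay, delayGraph_init, delayGraph_term] using hu)
    (by simpa only [exp_neg_mul_delay, delayGraph_init, delayGraph_term] using hv)
    (fun _ _ => Nat.cast_nonneg _) (fun i => monotone_coveringNumber_exp_neg (hKC.1 i))
    (fun i t => by exact_mod_cast hKC.coveringNumber_le hC i t) (fun _ _ => Nat.cast_nonneg _)
    (fun i => monotone_coveringNumber_exp_neg (hC i))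
    (fun i => integrableOn_exp_neg_mul_coveringNumber (hC i) (hint i))
  obtain ⟨c, hc_pos, hc⟩ := hU.exists_pos_eventually_le_coveringNumber hKC.1 hKC.mapsTo hUKC hs.1
    (fun i => (hu_pos i).le) hu
  refine ⟨fun i => u i * M, fun i => ?_, hM⟩
  refine (mul_pos hc_pos (hu_pos i)).trans_le (ge_of_tendsto (hM i) (hc.mono fun t ht => ?_))
  calc c * u i = Real.exp (-(s * t)) * (c * u i * Real.exp (s * t)) := by
        rw [mul_left_comm, ← Real.exp_add, neg_add_cancel, Real.exp_zero, mul_one]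
    _ ≤ _ := mul_le_mul_of_nonneg_left (ht i) (Real.exp_nonneg _)

end Asymptotics

end MWGraph

theorem stmt0_general {d : ℕ} {V E : Type} [Fintype V] [Fintype E] [DecidableEq V]
    (G : MWGraph d V E) (hSC : G.StronglyConnected) (C KC U : V → Set (Pt d))
    (hC : ∀ i, IsCompact (C i)) (hKC : G.IsInhomAttractor C KC) (hU : G.IsOSCWith U)
    (hUKC : ∀ i, (U i ∩ KC i).Nonempty) (s0 : ℝ) (hs0 : IsS0 G s0)
    (hint : ∀ i : V, ∫⁻ t in Set.Ioi (0 : ℝ),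
      ENNReal.ofReal (Real.exp (-s0 * t) * (coveringNumber (C i) (Real.exp (-t)) : ℝ)) < ⊤)
    (hGM : G.GM = Set.univ) :
    ∀ i : V, ∃ h : ℝ, 0 < h ∧
      Tendsto (fun t : ℝ => (coveringNumber (KC i) (Real.exp (-t)) : ℝ) /
        (h * Real.exp (s0 * t))) atTop (𝓝 1) := by
  intro i
  have : Nonempty V := ⟨i⟩
  obtain ⟨h, hh_pos, hh⟩ := hKC.exists_pos_tendsto_exp_neg_mul_coveringNumber hC hSC hU hUKC hs0
    hint hGM
  refine ⟨h i, hh_pos i, ?_⟩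
  have hlim := (hh i).div_const (h i)
  rw [div_self (hh_pos i).ne'] at hlim
  refine hlim.congr fun t => ?_
  rw [Real.exp_neg, mul_comm (h i), ← div_div, inv_mul_eq_div]

theorem stmt0 {d : ℕ} {V E : Type} [Fintype V] [Fintype E] [DecidableEq V]
    (G : MWGraph d V E) (hSC : G.StronglyConnected)
    (C K KC U : V → Set (Pt d))
    (hC : G.IsCondensation C) (hK : G.IsAttractor K) (hKC : G.IsInhomAttractor C KC)
    (hU : G.IsOSCWith U) (hUK : ∀ i, (U i ∩ K i).Nonempty)
    (hCU : ∀ i, C i ⊆ closure (U i))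
    (s0 : ℝ) (hs0 : IsS0 G s0)
    (hint : ∀ i : V, ∫⁻ t in Set.Ioi (0 : ℝ),
      ENNReal.ofReal (Real.exp (-s0 * t) * (coveringNumber (C i) (Real.exp (-t)) : ℝ)) < ⊤)
    (hGM : G.GM = Set.univ) :
    ∀ i : V, ∃ h : ℝ, 0 < h ∧
      Tendsto (fun t : ℝ => (coveringNumber (KC i) (Real.exp (-t)) : ℝ) /
        (h * Real.exp (s0 * t))) atTop (𝓝 1) := by
  exact stmt0_general G hSC C KC U (fun i => (hC i).1) hKC hU
    (fun i => (hUK i).mono (inter_subset_inter_right _ (hK.subset_isInhomAttractor hKC i)))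
    s0 hs0 hint hGM
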